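/- arXiv:1712.03504 — 2 statements merged into one kernel-verified Lean document; each statement's English description precedes it below -/
import Mathlib

section
/- Let G be a finite connected simple graph. If deg(P_G) ≤ 2, then any two odd cycles of G have a common vertex; in particular, G satisfies the odd cycle condition and the edge ring K[G] is Cohen–Macaulay (equivalently, normal). -/
open MvPolynomial Pointwise

/-- `ρ({i,j}) = e_i + e_j` : the 0/1 (incidence) vector of an edge. -/
noncomputable def rho {N : ℕ} (e : Sym2 (Fin N)) : Fin N → ℝ :=
  fun v => if v ∈ e then 1 else 0

/-- The edge polytope of a graph on `Fin N`. -/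
noncomputable def edgePolytope {N : ℕ} (G : SimpleGraph (Fin N)) : Set (Fin N → ℝ) :=
  convexHull ℝ (rho '' G.edgeSet)

/-- Number of lattice points of the `t`-th dilation (`= 1` for `t = 0`). -/
noncomputable def ehr {N : ℕ} (P : Set (Fin N → ℝ)) (t : ℕ) : ℕ :=
  if t = 0 then 1 else Nat.card {x : Fin N → ℤ // (fun i => (x i : ℝ)) ∈ (t : ℝ) • P}

/-- The dimension of a polytope: the rank of the direction of its affine span. -/
noncomputable def polyDim {N : ℕ} (P : Set (Fin N → ℝ)) : ℕ :=
  Module.finrank ℝ (affineSpan ℝ P).direction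

/-- The `i`-th coefficient of `(1-λ)^{d+1} (1 + Σ_{t≥1} |tP ∩ Z^N| λ^t)`. -/
noncomputable def deltaCoeff {N : ℕ} (P : Set (Fin N → ℝ)) (i : ℕ) : ℤ :=
  ∑ j ∈ Finset.range (i + 1),
    (-1 : ℤ) ^ j * (Nat.choose (polyDim P + 1) j : ℤ) * (ehr P (i - j) : ℤ)

/-- The degree of the δ-polynomial of `P`. -/
noncomputable def polyDeg {N : ℕ} (P : Set (Fin N → ℝ)) : ℕ :=
  sSup {i : ℕ | deltaCoeff P i ≠ 0}

/-- The monomial `t_i t_j s` attached to an edge `{i,j}`; `s` is the variable `none`. -/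
noncomputable def edgeMonom (K : Type*) [Field K] {V : Type*} (e : Sym2 V) :
    MvPolynomial (Option V) K :=
  Sym2.lift ⟨fun i j => X (some i) * X (some j) * X none, fun i j => by ring⟩ e

/-- The edge ring `K[G]`, the subalgebra generated by the monomials `t^{ρ(e)} s`. -/
noncomputable def edgeRing (K : Type*) [Field K] {V : Type*} (G : SimpleGraph V) :
    Subalgebra K (MvPolynomial (Option V) K) :=
  Algebra.adjoin K (edgeMonom K '' G.edgeSet)

/-- The toric ideal `I_G`: kernel of `x_e ↦ t^{ρ(e)} s`. -/
noncomputable def toricIdeal (K : Type*) [Field K] {V : Type*} (G : SimpleGraph V) :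
    Ideal (MvPolynomial G.edgeSet K) :=
  RingHom.ker (MvPolynomial.aeval (fun e : G.edgeSet => edgeMonom K (e : Sym2 V)) :
    MvPolynomial G.edgeSet K →ₐ[K] MvPolynomial (Option V) K)

/-- `S/I` has a `q`-linear (minimal graded free) resolution: there is a graded free
resolution of `S/I` in which the free module at homological step `i ≥ 1` is generated
in the single degree `q + i - 1`; equivalently all Betti numbers `β_{i,j}` with
`j ≠ q + i - 1` vanish. -/
def HasLinearResolution {σ K : Type*} [Field K] (q : ℕ)
    (I : Ideal (MvPolynomial σ K)) : Prop :=
  ∃ (b : ℕ → ℕ)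
    (φ₀ : (Fin (b 0) →₀ MvPolynomial σ K) →ₗ[MvPolynomial σ K] MvPolynomial σ K)
    (φ : ∀ i : ℕ,
      (Fin (b (i + 1)) →₀ MvPolynomial σ K) →ₗ[MvPolynomial σ K]
        (Fin (b i) →₀ MvPolynomial σ K)),
    LinearMap.range φ₀ = I ∧
    LinearMap.ker φ₀ = LinearMap.range (φ 0) ∧
    (∀ i, LinearMap.ker (φ i) = LinearMap.range (φ (i + 1))) ∧
    (∀ j, (φ₀ (Finsupp.single j 1)).IsHomogeneous q) ∧
    (∀ i j k, ((φ i (Finsupp.single j 1)) k).IsHomogeneous 1)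

/-!
Suppose that two odd cycles of `G` are disjoint. Take every edge of the two cycles once and, for
each vertex outside them, an edge joining it to the vertices reached so far twice. Half the sum of
these edge vectors is a lattice point in the interior of the cone over `P_G`, at height `s ≤ N - 3`;
here `dim P_G + 1 = N` because the odd cycles make the edge vectors span. By Ehrhart–Macdonald
reciprocity such a point forces `deg P_G ≥ N - s ≥ 3`. Only this inequality is needed, and it is
visible on a half-open regular triangulation of the cone: the `i`-th coefficient of the
`δ`-polynomial is the number of lattice points of height `i` in the half-open boxes of the
triangulation, and the negative of an interior lattice point of height `s` is moved by at least `N`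
generators into one of these boxes.

When all odd cycles meet, the edge ring is normal because its exponent monoid is saturated. By
Carathéodory's theorem an exponent in the saturation is a combination of linearly independent edge
vectors with nonnegative coefficients. The edges whose coefficients are not integers have degree
two at each vertex they meet and form disjoint odd cycles, hence at most one; but on a single odd
cycle the fractional parts sum to `1` at each of an odd number of vertices, against the integrality
of the total weight.
-/

/-! ### Normality of monomial algebras -/

section MonomialAlgebra

/-- A submonoid `S` is saturated if it contains every element of its group of differences some
positive multiple of which lies in `S`. Elements of that group lying in `M` are encoded as those
`c` with `a ∈ S` and `a + c ∈ S` for some `a`. -/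
def IsSaturated {M : Type*} [AddCommMonoid M] (S : AddSubmonoid M) : Prop :=
  ∀ a ∈ S, ∀ c, a + c ∈ S → ∀ k : ℕ, 0 < k → k • c ∈ S → c ∈ S

theorem exists_pos_nsmul_mem_of_forall_add_nsmul_mem {M : Type*} [AddCommMonoid M]
    [IsCancelAdd M] {S : AddSubmonoid M} (hS : S.FG) {d a : M} (h : ∀ n : ℕ, d + n • a ∈ S) :
    ∃ k : ℕ, 0 < k ∧ k • a ∈ S := by
  obtain ⟨T, rfl⟩ := hS
  choose f hf using fun n => AddSubmonoid.mem_closure_finset'.1 (h n)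
  obtain ⟨m, n, hmn, hle⟩ := wellQuasiOrdered_le f
  have hdiff : (n - m) • a = ∑ t : T, (f n t - f m t) • (t : M) := by
    refine add_left_cancel (a := d + m • a) ?_
    rw [add_assoc, ← add_nsmul, Nat.add_sub_cancel' hmn.le, hf n, hf m, ← Finset.sum_add_distrib]
    refine Finset.sum_congr rfl fun t _ => ?_
    rw [← add_nsmul, Nat.add_sub_cancel' (hle t)]
  refine ⟨n - m, Nat.sub_pos_of_lt hmn, hdiff ▸ ?_⟩
  exact AddSubmonoid.sum_mem _ fun t _ => nsmul_mem (AddSubmonoid.subset_closure t.2) _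

theorem isIntegrallyClosed_of_forall_isAlmostIntegral {k R : Type*} [CommRing k] [CommRing R]
    [IsDomain R] [IsIntegrallyClosed R] [Algebra k R] {A : Subalgebra k R}
    (h : ∀ y : R, IsAlmostIntegral A y → y ∈ A) : IsIntegrallyClosed A := by
  rw [isIntegrallyClosed_iff (FractionRing A)]
  intro x hx
  let L := FractionRing R
  have hinj : Function.Injective (algebraMap A L) := by
    rw [IsScalarTower.algebraMap_eq A R L]
    exact (IsFractionRing.injective R L).comp Subtype.val_injective
  let φ : FractionRing A →ₐ[A] L := IsFractionRing.liftAlgHom (g := Algebra.ofId A L) hinj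
  have hφx : IsIntegral R (φ x) := (hx.map φ).tower_top
  obtain ⟨y, hy⟩ := IsIntegrallyClosed.isIntegral_iff.1 hφx
  obtain ⟨r, hr, hrx⟩ := hx.isAlmostIntegral
  have hyA : IsAlmostIntegral A y := by
    refine ⟨r, hr, fun n => ?_⟩
    obtain ⟨z, hz⟩ := hrx n
    refine ⟨z, IsFractionRing.injective R L ?_⟩
    have hφz := congrArg φ hz
    simp only [map_smul, map_pow, ← hy] at hφz
    rw [AlgHom.commutes, Algebra.smul_def] at hφz
    exact hφz.trans (by rw [Algebra.smul_def, map_mul, map_pow]; rfl)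
  refine ⟨⟨y, h y hyA⟩, φ.toRingHom.injective ?_⟩
  change φ (algebraMap A _ ⟨y, h y hyA⟩) = φ x
  rw [AlgHom.commutes, ← hy]
  rfl

variable {σ R : Type*}

/-- The algebra of the polynomials all of whose exponents lie in the submonoid `S`, that is, the
monoid algebra of `S` inside the polynomial ring. -/
noncomputable def supportSubalgebra (R : Type*) [CommSemiring R] (S : AddSubmonoid (σ →₀ ℕ)) :
    Subalgebra R (MvPolynomial σ R) :=
  (restrictSupport R (S : Set (σ →₀ ℕ))).toSubalgebra
    ((monomial_mem_restrictSupport R).2 (Or.inl S.zero_mem))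
    (fun x y hx hy => by
      have := Submodule.mul_mem_mul hx hy
      rw [← restrictSupport_add R] at this
      exact restrictSupport_mono R (Set.add_subset_iff.2 fun a ha b hb => S.add_mem ha hb) this)

theorem mem_supportSubalgebra [CommSemiring R] {S : AddSubmonoid (σ →₀ ℕ)} {p : MvPolynomial σ R} :
    p ∈ supportSubalgebra R S ↔ ∀ m ∈ p.support, m ∈ S :=
  Iff.rfl

theorem monomial_mem_supportSubalgebra [CommSemiring R] {S : AddSubmonoid (σ →₀ ℕ)} {m : σ →₀ ℕ}
    (hm : m ∈ S) (r : R) : monomial m r ∈ supportSubalgebra R S :=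
  (monomial_mem_restrictSupport R).2 (Or.inl hm)

theorem adjoin_monomial_image [CommSemiring R] (T : Set (σ →₀ ℕ)) :
    Algebra.adjoin R ((fun m => monomial m (1 : R)) '' T) =
      supportSubalgebra R (AddSubmonoid.closure T) := by
  refine le_antisymm (Algebra.adjoin_le ?_) fun p hp => ?_
  · rintro _ ⟨m, hm, rfl⟩
    exact monomial_mem_supportSubalgebra (AddSubmonoid.subset_closure hm) 1
  have hmonomial : ∀ m ∈ AddSubmonoid.closure T, monomial m (1 : R) ∈
      Algebra.adjoin R ((fun m => monomial m (1 : R)) '' T) := by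
    intro m hm
    induction hm using AddSubmonoid.closure_induction with
    | mem m hm => exact Algebra.subset_adjoin ⟨m, hm, rfl⟩
    | zero => exact one_mem _
    | add m n _ _ hm hn => simpa [monomial_mul] using mul_mem hm hn
  rw [p.as_sum]
  refine sum_mem fun m hm => ?_
  simpa [smul_monomial] using Subalgebra.smul_mem _ (hmonomial m (hp hm)) (coeff m p)

variable [CommRing R] [IsDomain R] {S : AddSubmonoid (σ →₀ ℕ)}

theorem degree_mem_of_isAlmostIntegral (hfg : S.FG) (hsat : IsSaturated S) (mo : MonomialOrder σ)
    {p : MvPolynomial σ R} (hp : p ≠ 0) (hint : IsAlmostIntegral (supportSubalgebra R S) p) :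
    mo.degree p ∈ S := by
  obtain ⟨r, hr, hrp⟩ := hint
  have hr0 : (r : MvPolynomial σ R) ≠ 0 := by simpa using nonZeroDivisors.ne_zero hr
  have hprog : ∀ n : ℕ, mo.degree (r : MvPolynomial σ R) + n • mo.degree p ∈ S := by
    intro n
    obtain ⟨y, hy⟩ := hrp n
    have hry : (r : MvPolynomial σ R) * p ^ n = y := hy.symm
    have hry0 := mul_ne_zero hr0 (pow_ne_zero n hp)
    rw [← mo.degree_pow, ← mo.degree_mul hr0 (pow_ne_zero n hp)]
    exact mem_supportSubalgebra.1 (hry ▸ y.2) _ (mo.degree_mem_support hry0)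
  obtain ⟨k, hk, hkp⟩ := exists_pos_nsmul_mem_of_forall_add_nsmul_mem hfg hprog
  exact hsat _ (by simpa using hprog 0) _ (by simpa using hprog 1) k hk hkp

theorem mem_supportSubalgebra_of_isAlmostIntegral (hfg : S.FG) (hsat : IsSaturated S)
    (mo : MonomialOrder σ) (p : MvPolynomial σ R)
    (hint : IsAlmostIntegral (supportSubalgebra R S) p) : p ∈ supportSubalgebra R S := by
  induction hs : mo.toSyn (mo.degree p) using WellFoundedLT.induction generalizing p with
  | ind s ih =>
  subst hs
  rcases eq_or_ne p 0 with rfl | hp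
  · exact zero_mem _
  have hlead : mo.leadingTerm p ∈ supportSubalgebra R S :=
    monomial_mem_supportSubalgebra (degree_mem_of_isAlmostIntegral hfg hsat mo hp hint) _
  rw [← sub_add_cancel p (mo.leadingTerm p)]
  refine add_mem ?_ hlead
  by_cases hsub : p - mo.leadingTerm p = 0
  · exact hsub ▸ zero_mem _
  · refine ih _ (mo.degree_sub_leadingTerm_lt_degree
      (mo.degree_ne_zero_of_sub_leadingTerm_ne_zero hsub)) _ ?_ rfl
    rw [← mem_completeIntegralClosure] at hint ⊢
    exact sub_mem hint
      ((completeIntegralClosure (supportSubalgebra R S) (MvPolynomial σ R)).algebraMap_mem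
        ⟨_, hlead⟩)

theorem isIntegrallyClosed_supportSubalgebra [IsIntegrallyClosed (MvPolynomial σ R)]
    (hfg : S.FG) (hsat : IsSaturated S) (mo : MonomialOrder σ) :
    IsIntegrallyClosed (supportSubalgebra R S) :=
  isIntegrallyClosed_of_forall_isAlmostIntegral
    (mem_supportSubalgebra_of_isAlmostIntegral hfg hsat mo)

end MonomialAlgebra

/-! ### Odd cycles and colourings -/

section OddCycles

variable {V : Type*} {G : SimpleGraph V}

/-- Any two odd cycles of `G` have a common vertex. -/
def OddCyclesIntersect (G : SimpleGraph V) : Prop :=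
  ∀ (v w : V) (c₁ : G.Walk v v) (c₂ : G.Walk w w),
    c₁.IsCycle → c₂.IsCycle → Odd c₁.length → Odd c₂.length →
      ∃ x, x ∈ c₁.support ∧ x ∈ c₂.support

theorem exists_odd_isCycle_of_odd_length {u : V} (w : G.Walk u u) (hw : Odd w.length) :
    ∃ (v : V) (c : G.Walk v v), c.IsCycle ∧ Odd c.length := by
  induction hn : w.length using Nat.strong_induction_on generalizing u w with
  | h n ih =>
  subst hn
  by_cases hc : w.IsCycle
  · exact ⟨u, w, hc, hw⟩
  cases w with
  | nil => simp at hw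
  | @cons _ v _ h p =>
  simp only [SimpleGraph.Walk.length_cons] at hw ih
  have hp0 : p.length ≠ 0 := fun h0 => h.ne (SimpleGraph.Walk.eq_of_length_eq_zero h0).symm
  have hp : ¬ p.IsPath := fun hp => hc <| by
    rw [SimpleGraph.Walk.isCycle_iff_isPath_tail_and_le_length]
    refine ⟨by simpa using hp, ?_⟩
    rw [SimpleGraph.Walk.length_cons]
    grind
  -- A non-trivial closed subwalk, or its complement in `w`, is a shorter odd closed walk.
  rw [SimpleGraph.Walk.isPath_iff_isSubwalk_imp_nil] at hp
  push Not at hp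
  obtain ⟨x, c, ⟨r, s, rfl⟩, hcnil⟩ := hp
  rw [← SimpleGraph.Walk.length_eq_zero_iff] at hcnil
  simp only [SimpleGraph.Walk.length_append] at hw ih
  rcases Nat.even_or_odd c.length with heven | hodd
  · refine ih _ ?_ (SimpleGraph.Walk.cons h (r.append s)) ?_ rfl
    all_goals
      simp only [SimpleGraph.Walk.length_cons, SimpleGraph.Walk.length_append]
      grind
  · exact ih _ (by omega) c hodd rfl

theorem colorable_two_of_forall_isCycle_even
    (h : ∀ (v : V) (c : G.Walk v v), c.IsCycle → Even c.length) : G.Colorable 2 := by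
  rw [SimpleGraph.two_colorable_iff_forall_loop_even]
  intro u w
  by_contra hw
  obtain ⟨v, c, hc, hodd⟩ := exists_odd_isCycle_of_odd_length w (Nat.not_even_iff_odd.1 hw)
  exact Nat.not_even_iff_odd.2 hodd (h v c hc)

theorem ncard_support_of_isCycle {v : V} {c : G.Walk v v} (hc : c.IsCycle) :
    {x | x ∈ c.support}.ncard = c.length := by
  classical
  have hset : {x | x ∈ c.support} = c.support.tail.toFinset := by
    ext x
    rw [Set.mem_ofPred_eq, ← c.cons_tail_support, List.mem_cons, List.tail_cons,
      Finset.mem_coe, List.mem_toFinset, or_iff_right_of_imp]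
    rintro rfl
    exact c.end_mem_tail_support hc.not_nil
  rw [hset, Set.ncard_coe_finset, List.toFinset_card_of_nodup hc.support_nodup,
    List.length_tail, c.length_support, Nat.add_sub_cancel]

theorem support_subset_of_isCycle {v : V} {c : G.Walk v v} (hc : c.IsCycle) :
    {x | x ∈ c.support} ⊆ G.support := by
  intro x hx
  have hcard := hc.ncard_neighborSet_toSubgraph_eq_two hx
  obtain ⟨y, hy⟩ : (c.toSubgraph.neighborSet x).Nonempty :=
    Set.nonempty_of_ncard_ne_zero (by omega)
  exact ⟨y, hy.adj_sub⟩

theorem mem_support_of_adj_of_ncard_neighborSet_eq_two {v : V} {c : G.Walk v v} (hc : c.IsCycle)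
    {x y : V} (hx : x ∈ c.support) (hxy : G.Adj x y) (hdeg : (G.neighborSet x).ncard = 2) :
    y ∈ c.support := by
  have hfin : (G.neighborSet x).Finite := Set.finite_of_ncard_ne_zero (by omega)
  have heq := Set.eq_of_subset_of_ncard_le (c.toSubgraph.neighborSet_subset x)
    (by rw [hdeg, hc.ncard_neighborSet_toSubgraph_eq_two hx]) hfin
  have hy : y ∈ c.toSubgraph.neighborSet x := heq ▸ hxy
  simpa using c.toSubgraph.edge_vert hy.symm

end OddCycles

/-! ### Carathéodory's theorem for cones -/

section Cone

variable {E V : Type*} [Fintype E] [AddCommGroup V] [Module ℝ V] {v : E → V}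

theorem exists_relation_of_not_linearIndepOn_support {q : E → ℝ}
    (hq : ¬ LinearIndepOn ℝ v (Function.support q)) :
    ∃ z : E → ℝ, z ≠ 0 ∧ Function.support z ⊆ Function.support q ∧
      Fintype.linearCombination ℝ v z = 0 := by
  classical
  rw [linearIndepOn_iff] at hq
  push Not at hq
  obtain ⟨l, hl, hlv, hl0⟩ := hq
  refine ⟨l, fun h => hl0 (DFunLike.coe_injective h), ?_, ?_⟩
  · rwa [Finsupp.mem_supported, ← Finsupp.fun_support_eq] at hl
  · rw [← hlv, ← Finsupp.linearCombination_eq_fintype_linearCombination_apply ℝ v]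
    simp

theorem exists_nonneg_sub_smul_eq_zero {ι : Type*} [Finite ι] {q z : ι → ℝ} (hq : 0 ≤ q)
    (hz : ∃ i, 0 < z i) :
    ∃ t : ℝ, 0 ≤ t ∧ 0 ≤ q - t • z ∧ ∃ i, z i ≠ 0 ∧ (q - t • z) i = 0 := by
  obtain ⟨e, he, hmin⟩ := Set.exists_min_image {e | 0 < z e} (fun e => q e / z e)
    (Set.toFinite _) hz
  rw [Set.mem_ofPred_eq] at he
  have ht : 0 ≤ q e / z e := div_nonneg (hq e) he.le
  refine ⟨q e / z e, ht, fun f => ?_, e, he.ne', by simp [he.ne']⟩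
  rcases le_or_gt (z f) 0 with hf | hf
  · have := mul_nonpos_of_nonneg_of_nonpos ht hf
    simpa using this.trans (hq f)
  · simpa using (le_div_iff₀ hf).1 (hmin f hf)

theorem exists_linearIndepOn_support_of_cost_le {w : E → ℝ} (hw : ∀ e, 0 < w e) {q : E → ℝ}
    (hq : 0 ≤ q) :
    ∃ q' : E → ℝ, 0 ≤ q' ∧ Fintype.linearCombination ℝ v q' = Fintype.linearCombination ℝ v q ∧
      w ⬝ᵥ q' ≤ w ⬝ᵥ q ∧ Function.support q' ⊆ Function.support q ∧
      LinearIndepOn ℝ v (Function.support q') := by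
  induction hn : (Function.support q).ncard using Nat.strong_induction_on generalizing q with
  | h n ih =>
  by_cases hind : LinearIndepOn ℝ v (Function.support q)
  · exact ⟨q, hq, rfl, le_rfl, subset_rfl, hind⟩
  -- Up to sign the relation has nonnegative cost; as `w` is positive it has a positive entry.
  obtain ⟨z, hz0, hzq, hzv, hwz⟩ : ∃ z : E → ℝ, z ≠ 0 ∧ Function.support z ⊆ Function.support q ∧
      Fintype.linearCombination ℝ v z = 0 ∧ 0 ≤ w ⬝ᵥ z := by
    obtain ⟨z, hz0, hzq, hzv⟩ := exists_relation_of_not_linearIndepOn_support hind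
    rcases le_total 0 (w ⬝ᵥ z) with h | h
    · exact ⟨z, hz0, hzq, hzv, h⟩
    · exact ⟨-z, neg_ne_zero.2 hz0, by simpa using hzq, by simp [hzv], by simpa using h⟩
  have hpos : ∃ e, 0 < z e := by
    by_contra! hle
    obtain ⟨e, he⟩ := Function.ne_iff.1 hz0
    refine hwz.not_gt (Finset.sum_neg' (fun f _ => ?_) ⟨e, Finset.mem_univ e, ?_⟩)
    · exact mul_nonpos_of_nonneg_of_nonpos (hw f).le (hle f)
    · exact mul_neg_of_pos_of_neg (hw e) ((hle e).lt_of_ne he)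
  obtain ⟨t, ht, hnonneg, e, hze, he⟩ := exists_nonneg_sub_smul_eq_zero hq hpos
  have hsupp : Function.support (q - t • z) ⊆ Function.support q := by
    intro f hf hqf
    have hzf : z f = 0 := Function.notMem_support.1 fun h => hzq h hqf
    exact hf (by simp [hqf, hzf])
  have hlt : (Function.support (q - t • z)).ncard < n := hn ▸ Set.ncard_lt_ncard
    ((Set.ssubset_iff_of_subset hsupp).2 ⟨e, hzq hze, Function.notMem_support.2 he⟩)
  obtain ⟨q', h0, hv, hcost, hsub, hq'⟩ := ih _ hlt hnonneg rfl
  refine ⟨q', h0, by rw [hv, map_sub, map_smul, hzv, smul_zero, sub_zero], hcost.trans ?_,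
    hsub.trans hsupp, hq'⟩
  rw [dotProduct_sub, dotProduct_smul, smul_eq_mul]
  exact sub_le_self _ (mul_nonneg ht hwz)

end Cone

/-! ### Fractional edge weights -/

section Rho

variable {N : ℕ}

theorem rho_mk {a b : Fin N} (hab : a ≠ b) : rho s(a, b) = Pi.single a 1 + Pi.single b 1 := by
  ext i
  simp only [rho, Sym2.mem_iff, Pi.add_apply, Pi.single_apply]
  grind

theorem dotProduct_rho_mk (f : Fin N → ℝ) {a b : Fin N} (hab : a ≠ b) :
    f ⬝ᵥ rho s(a, b) = f a + f b := by
  rw [rho_mk hab, dotProduct_add, dotProduct_single_one, dotProduct_single_one]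

theorem sum_rho {e : Sym2 (Fin N)} (he : ¬ e.IsDiag) : ∑ i, rho e i = 2 := by
  induction e with
  | _ a b =>
  rw [← one_dotProduct, dotProduct_rho_mk 1 (by simpa using he)]
  norm_num

theorem linearCombination_rho_apply (q : Sym2 (Fin N) → ℝ) (i : Fin N) :
    Fintype.linearCombination ℝ rho q i = ∑ e with i ∈ e, q e := by
  simp [Fintype.linearCombination_apply, rho, Finset.sum_filter]

theorem sum_linearCombination_rho {q : Sym2 (Fin N) → ℝ} (hq : ∀ e, e.IsDiag → q e = 0) :
    ∑ i, Fintype.linearCombination ℝ rho q i = 2 * ∑ e, q e := by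
  simp only [Fintype.linearCombination_apply, Finset.sum_apply, Pi.smul_apply, smul_eq_mul]
  rw [Finset.sum_comm, Finset.mul_sum]
  refine Finset.sum_congr rfl fun e _ => ?_
  rw [← Finset.mul_sum]
  by_cases he : e.IsDiag
  · simp [hq e he]
  · rw [sum_rho he, mul_comm]

end Rho

section SpanningEdges

variable {N : ℕ} {H : SimpleGraph (Fin N)}

theorem span_rho_le_span_single :
    Submodule.span ℝ (rho '' H.edgeSet) ≤
      Submodule.span ℝ ((fun i => Pi.single i (1 : ℝ)) '' H.support) := by
  rw [Submodule.span_le]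
  rintro _ ⟨e, he, rfl⟩
  induction e with
  | _ a b =>
  have hab : H.Adj a b := he
  rw [rho_mk hab.ne]
  exact add_mem (Submodule.subset_span ⟨a, ⟨b, hab⟩, rfl⟩)
    (Submodule.subset_span ⟨b, ⟨a, hab.symm⟩, rfl⟩)

theorem finrank_span_image_eq_ncard {ι M : Type*} [Finite ι] [AddCommGroup M] [Module ℝ M]
    {v : ι → M} {S : Set ι} (h : LinearIndepOn ℝ v S) :
    Module.finrank ℝ (Submodule.span ℝ (v '' S)) = S.ncard := by
  have := Fintype.ofFinite S
  rw [Set.image_eq_range, finrank_span_eq_card (b := fun i : S => v i) h,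
    ← Nat.card_eq_fintype_card, Nat.card_coe_set_eq]

-- Independence bounds `|E|` by the number of vertices met by edges, the handshake lemma bounds it
-- from below, so both bounds are equalities.
theorem degree_eq_two_and_span_rho_eq [DecidableRel H.Adj] (hind : LinearIndepOn ℝ rho H.edgeSet)
    (hdeg : ∀ i, H.degree i ≠ 1) :
    (∀ i ∈ H.support, H.degree i = 2) ∧
      Submodule.span ℝ (rho '' H.edgeSet) =
        Submodule.span ℝ ((fun i => Pi.single i (1 : ℝ)) '' H.support) := by
  classical
  have hsingle := finrank_span_image_eq_ncard
    ((Pi.linearIndependent_single_one (Fin N) ℝ).linearIndepOn H.support)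
  have hrho := finrank_span_image_eq_ncard hind
  have hle := Submodule.finrank_mono (span_rho_le_span_single (H := H))
  rw [hrho, hsingle] at hle
  have hsum := H.sum_degrees_support_eq_twice_card_edges
  rw [← Set.ncard_coe_finset H.edgeFinset, SimpleGraph.coe_edgeFinset] at hsum
  have htwo : ∀ i ∈ H.support.toFinset, 2 ≤ H.degree i := fun i hi => by
    have := (H.degree_pos_iff_mem_support i).2 (Set.mem_toFinset.1 hi)
    have := hdeg i
    omega
  have hge := Finset.card_nsmul_le_sum _ _ 2 htwo
  rw [hsum, smul_eq_mul, ← Set.ncard_eq_toFinset_card'] at hge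
  have heq : ∑ i ∈ H.support.toFinset, 2 = ∑ i ∈ H.support.toFinset, H.degree i := by
    rw [hsum, Finset.sum_const, smul_eq_mul, ← Set.ncard_eq_toFinset_card']
    omega
  refine ⟨fun i hi => ?_, Submodule.eq_of_le_of_finrank_le span_rho_le_span_single ?_⟩
  · exact ((Finset.sum_eq_sum_iff_of_le htwo).1 heq i (Set.mem_toFinset.2 hi)).symm
  · rw [hrho, hsingle]
    omega

theorem dotProduct_eq_zero_of_mem_span_rho {s : Fin N → ℝ}
    (hs : ∀ i j, H.Adj i j → s i + s j = 0) {x : Fin N → ℝ}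
    (hx : x ∈ Submodule.span ℝ (rho '' H.edgeSet)) : s ⬝ᵥ x = 0 := by
  induction hx using Submodule.span_induction with
  | mem x hx =>
    obtain ⟨e, he, rfl⟩ := hx
    induction e with
    | _ a b =>
    have hab : H.Adj a b := he
    rw [dotProduct_rho_mk s hab.ne, hs a b hab]
  | zero => exact dotProduct_zero s
  | add x y _ _ hx hy => rw [dotProduct_add, hx, hy, add_zero]
  | smul t x _ hx => rw [dotProduct_smul, hx, smul_zero]

-- A 2-colouring of the complement of `W` would give a functional with values `±1` there that
-- vanishes on all edges.
theorem exists_odd_isCycle_disjoint {W : Set (Fin N)} (hW : ∀ i j, H.Adj i j → i ∈ W → j ∈ W)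
    {i : Fin N} (hi : i ∉ W)
    (hspan : Pi.single i 1 ∈ Submodule.span ℝ (rho '' H.edgeSet)) :
    ∃ (v : Fin N) (c : H.Walk v v), c.IsCycle ∧ Odd c.length ∧ ∀ x ∈ c.support, x ∉ W := by
  classical
  by_contra! h
  obtain ⟨col⟩ : (H.induce Wᶜ).Colorable 2 := by
    refine colorable_two_of_forall_isCycle_even fun v c hc => ?_
    by_contra hodd
    let f := (SimpleGraph.Embedding.induce (G := H) Wᶜ)
    obtain ⟨x, hx, hxW⟩ := h _ (c.map f.toHom) (hc.map f.injective)
      (by simpa using Nat.not_even_iff_odd.1 hodd)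
    rw [SimpleGraph.Walk.support_map, List.mem_map] at hx
    obtain ⟨y, -, rfl⟩ := hx
    exact y.2 hxW
  let s : Fin N → ℝ := fun x => if hx : x ∈ W then 0 else if col ⟨x, hx⟩ = 0 then 1 else -1
  have hs : ∀ a b, H.Adj a b → s a + s b = 0 := by
    intro a b hab
    by_cases ha : a ∈ W
    · simp [s, ha, hW a b hab ha]
    · have hb : b ∉ W := fun hb => ha (hW b a hab.symm hb)
      have hne : col ⟨a, ha⟩ ≠ col ⟨b, hb⟩ :=
        col.valid (show (H.induce Wᶜ).Adj ⟨a, ha⟩ ⟨b, hb⟩ from hab)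
      have hiff : col ⟨a, ha⟩ = 0 ↔ ¬ col ⟨b, hb⟩ = 0 := by omega
      by_cases hb0 : col ⟨b, hb⟩ = 0 <;> simp [s, ha, hb, hiff, hb0]
  have hzero := dotProduct_eq_zero_of_mem_span_rho hs hspan
  rw [dotProduct_single_one] at hzero
  simp only [s, dif_neg hi] at hzero
  split_ifs at hzero <;> norm_num at hzero

end SpanningEdges

section FractionalWeight

variable {N : ℕ} {G H : SimpleGraph (Fin N)} {r : Sym2 (Fin N) → ℝ}

/-- A fractional weight on `H`: edge weights strictly between `0` and `1`, extended by zero to all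
pairs, whose sum at each vertex is an integer. -/
structure IsFractionalWeight (H : SimpleGraph (Fin N)) (r : Sym2 (Fin N) → ℝ) : Prop where
  mem_Ioo : ∀ e ∈ H.edgeSet, r e ∈ Set.Ioo 0 1
  eq_zero : ∀ e ∉ H.edgeSet, r e = 0
  exists_int : ∀ i, ∃ c : ℤ, Fintype.linearCombination ℝ rho r i = c

namespace IsFractionalWeight

theorem linearCombination_apply [DecidableRel H.Adj] (hr : IsFractionalWeight H r) (i : Fin N) :
    Fintype.linearCombination ℝ rho r i = ∑ e ∈ H.incidenceFinset i, r e := by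
  rw [linearCombination_rho_apply, H.incidenceFinset_eq_filter]
  refine (Finset.sum_subset (Finset.filter_subset_filter _ (Finset.subset_univ _)) ?_).symm
  intro e he heH
  refine hr.eq_zero e fun h => heH (Finset.mem_filter.2 ⟨?_, (Finset.mem_filter.1 he).2⟩)
  exact SimpleGraph.mem_edgeFinset.2 h

theorem mem_Ioo_of_mem_incidenceFinset [DecidableRel H.Adj] (hr : IsFractionalWeight H r)
    {i : Fin N} {e : Sym2 (Fin N)} (he : e ∈ H.incidenceFinset i) : r e ∈ Set.Ioo 0 1 :=
  hr.mem_Ioo e ((H.mem_incidenceFinset i e).1 he).1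

theorem degree_ne_one [DecidableRel H.Adj] (hr : IsFractionalWeight H r) (i : Fin N) :
    H.degree i ≠ 1 := by
  intro hdeg
  rw [← H.card_incidenceFinset_eq_degree, Finset.card_eq_one] at hdeg
  obtain ⟨e, he⟩ := hdeg
  obtain ⟨c, hc⟩ := hr.exists_int i
  rw [hr.linearCombination_apply, he, Finset.sum_singleton] at hc
  obtain ⟨h0, h1⟩ := hr.mem_Ioo_of_mem_incidenceFinset (he ▸ Finset.mem_singleton_self e)
  rw [hc] at h0 h1
  norm_cast at h0 h1
  omega

theorem linearCombination_eq_one [DecidableRel H.Adj] (hr : IsFractionalWeight H r) {i : Fin N}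
    (hdeg : H.degree i = 2) : Fintype.linearCombination ℝ rho r i = 1 := by
  have hcard : (H.incidenceFinset i).card = 2 := by rw [H.card_incidenceFinset_eq_degree, hdeg]
  have hne : (H.incidenceFinset i).Nonempty := Finset.card_pos.1 (by omega)
  obtain ⟨c, hc⟩ := hr.exists_int i
  have hpos : 0 < ∑ e ∈ H.incidenceFinset i, r e :=
    Finset.sum_pos (fun e he => (hr.mem_Ioo_of_mem_incidenceFinset he).1) hne
  have hlt : ∑ e ∈ H.incidenceFinset i, r e < ∑ _e ∈ H.incidenceFinset i, (1 : ℝ) :=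
    Finset.sum_lt_sum_of_nonempty hne fun e he => (hr.mem_Ioo_of_mem_incidenceFinset he).2
  rw [Finset.sum_const, hcard] at hlt
  rw [← hr.linearCombination_apply, hc] at hpos hlt
  rw [hc]
  norm_num at hlt
  norm_cast at hpos hlt ⊢
  omega

theorem linearCombination_eq_zero (hr : IsFractionalWeight H r) {i : Fin N} (hi : i ∉ H.support) :
    Fintype.linearCombination ℝ rho r i = 0 := by
  rw [linearCombination_rho_apply]
  refine Finset.sum_eq_zero fun e he => hr.eq_zero e fun heH => hi ?_
  obtain ⟨j, rfl⟩ := Sym2.mem_iff_exists.1 (Finset.mem_filter.1 he).2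
  exact ⟨j, heH⟩

theorem even_ncard_support [DecidableRel H.Adj] (hr : IsFractionalWeight H r)
    (hdeg : ∀ i ∈ H.support, H.degree i = 2) (htot : ∃ m : ℤ, ∑ e, r e = m) :
    Even H.support.ncard := by
  classical
  obtain ⟨m, hm⟩ := htot
  have hsum : (H.support.ncard : ℝ) = 2 * m := calc
    (H.support.ncard : ℝ) = ∑ i ∈ H.support.toFinset, 1 := by
      rw [Finset.sum_const, nsmul_one, Set.ncard_eq_toFinset_card']
    _ = ∑ i ∈ H.support.toFinset, Fintype.linearCombination ℝ rho r i :=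
      Finset.sum_congr rfl fun i hi =>
        (hr.linearCombination_eq_one (hdeg i (Set.mem_toFinset.1 hi))).symm
    _ = ∑ i, Fintype.linearCombination ℝ rho r i :=
      Finset.sum_subset (Finset.subset_univ _) fun i _ hi =>
        hr.linearCombination_eq_zero fun h => hi (Set.mem_toFinset.2 h)
    _ = 2 * m := by
      rw [sum_linearCombination_rho, hm]
      exact fun e he => hr.eq_zero e fun h => H.not_isDiag_of_mem_edgeSet h he
  have hcast : ((H.support.ncard : ℕ) : ℤ) = 2 * m := by exact_mod_cast hsum
  exact (Int.even_coe_nat _).1 (hcast ▸ even_two_mul m)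

theorem edgeSet_eq_empty (hr : IsFractionalWeight H r) (htot : ∃ m : ℤ, ∑ e, r e = m)
    (hind : LinearIndepOn ℝ rho H.edgeSet) (hHG : H ≤ G) (hG : OddCyclesIntersect G) :
    H.edgeSet = ∅ := by
  classical
  obtain ⟨hdeg, hspan⟩ := degree_eq_two_and_span_rho_eq hind hr.degree_ne_one
  have hsingle : ∀ i ∈ H.support, Pi.single i 1 ∈ Submodule.span ℝ (rho '' H.edgeSet) :=
    fun i hi => hspan ▸ Submodule.subset_span ⟨i, hi, rfl⟩
  by_contra hne
  obtain ⟨i, hi⟩ : ∃ i, i ∈ H.support := by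
    obtain ⟨e, he⟩ := Set.nonempty_iff_ne_empty.2 hne
    induction e with
    | _ i j => exact ⟨i, j, he⟩
  obtain ⟨v, C, hC, hCodd, -⟩ :=
    exists_odd_isCycle_disjoint (W := ∅) (by simp) (Set.notMem_empty i) (hsingle i hi)
  have hclosed : ∀ a b, H.Adj a b → a ∈ {x | x ∈ C.support} → b ∈ {x | x ∈ C.support} := by
    intro a b hab ha
    refine mem_support_of_adj_of_ncard_neighborSet_eq_two hC ha hab ?_
    rw [Set.ncard_eq_toFinset_card', Set.toFinset_card, H.card_neighborSet_eq_degree]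
    exact hdeg a ⟨b, hab⟩
  have hsupp : H.support = {x | x ∈ C.support} := by
    refine Set.Subset.antisymm (fun a ha => ?_) (support_subset_of_isCycle hC)
    by_contra haC
    obtain ⟨w, D, hD, hDodd, hdisj⟩ := exists_odd_isCycle_disjoint hclosed haC (hsingle a ha)
    obtain ⟨x, hxC, hxD⟩ := hG v w (C.mapLe hHG) (D.mapLe hHG) (hC.mapLe hHG) (hD.mapLe hHG)
      (by simpa using hCodd) (by simpa using hDodd)
    rw [SimpleGraph.Walk.support_mapLe_eq_support] at hxC hxD
    exact hdisj x hxD hxC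
  have heven := hr.even_ncard_support hdeg htot
  rw [hsupp, ncard_support_of_isCycle hC] at heven
  exact Nat.not_even_iff_odd.2 hCodd heven

end IsFractionalWeight

end FractionalWeight

/-! ### Normality of the edge ring -/

section EdgeRing

variable {N : ℕ} {G : SimpleGraph (Fin N)}

theorem exists_int_linearCombination_rho (n : Sym2 (Fin N) → ℤ) (i : Fin N) :
    ∃ c : ℤ, Fintype.linearCombination ℝ rho (fun e => (n e : ℝ)) i = c :=
  ⟨∑ e with i ∈ e, n e, by rw [linearCombination_rho_apply, Int.cast_sum]⟩

theorem fract_eq_zero_of_linearIndepOn_support (hG : OddCyclesIntersect G)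
    {p : Sym2 (Fin N) → ℝ} (hpG : Function.support p ⊆ G.edgeSet)
    (hind : LinearIndepOn ℝ rho (Function.support p))
    (hint : ∀ i, ∃ c : ℤ, Fintype.linearCombination ℝ rho p i = c)
    (htot : ∃ m : ℤ, ∑ e, p e = m) (e : Sym2 (Fin N)) : Int.fract (p e) = 0 := by
  let r : Sym2 (Fin N) → ℝ := fun e => Int.fract (p e)
  have hr : r = p - fun e => (⌊p e⌋ : ℝ) := rfl
  have hrp : Function.support r ⊆ Function.support p := fun e he h => he (by simp [r, h])
  obtain ⟨H, hH⟩ : ∃ H : SimpleGraph (Fin N), H.edgeSet = Function.support r :=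
    ⟨SimpleGraph.fromEdgeSet (Function.support r), by
      rw [SimpleGraph.edgeSet_fromEdgeSet, sdiff_eq_left, Set.disjoint_left]
      exact fun e he => G.not_isDiag_of_mem_edgeSet (hpG (hrp he))⟩
  have hfrac : IsFractionalWeight H r :=
    { mem_Ioo := fun e he => ⟨(Int.fract_nonneg _).lt_of_ne' (hH ▸ he :), Int.fract_lt_one _⟩
      eq_zero := fun e he => Function.notMem_support.1 (hH ▸ he)
      exists_int := fun i => by
        obtain ⟨a, ha⟩ := hint i
        obtain ⟨b, hb⟩ := exists_int_linearCombination_rho (fun e => ⌊p e⌋) i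
        exact ⟨a - b, by rw [hr, map_sub, Pi.sub_apply, ha, hb, Int.cast_sub]⟩ }
  have hfractot : ∃ m : ℤ, ∑ e, r e = m := by
    obtain ⟨m, hm⟩ := htot
    exact ⟨m - ∑ e, ⌊p e⌋, by
      simp only [hr, Pi.sub_apply, Finset.sum_sub_distrib, hm, Int.cast_sub, Int.cast_sum]⟩
  have hempty := hfrac.edgeSet_eq_empty hfractot (hH ▸ hind.mono hrp)
    (SimpleGraph.edgeSet_subset_edgeSet.1 (hH ▸ hrp.trans hpG)) hG
  have he : e ∉ Function.support r := by
    rw [← hH, hempty]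
    exact Set.notMem_empty e
  exact Function.notMem_support.1 he

-- Carathéodory's theorem makes the edges of nonzero weight independent.
theorem exists_nat_linearCombination_rho_eq (hG : OddCyclesIntersect G) {q : Sym2 (Fin N) → ℝ}
    (hq : 0 ≤ q) (hqG : Function.support q ⊆ G.edgeSet)
    (hint : ∀ i, ∃ c : ℤ, Fintype.linearCombination ℝ rho q i = c)
    (htot : ∃ m : ℤ, ∑ e, q e = m) :
    ∃ n : Sym2 (Fin N) → ℕ, Function.support n ⊆ G.edgeSet ∧
      Fintype.linearCombination ℝ rho (fun e => (n e : ℝ)) = Fintype.linearCombination ℝ rho q ∧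
      ∑ e, (n e : ℝ) = ∑ e, q e := by
  obtain ⟨p, hp, hpq, -, hsupp, hind⟩ :=
    exists_linearIndepOn_support_of_cost_le (v := rho) (w := 1) (fun _ => one_pos) hq
  have hpG : Function.support p ⊆ G.edgeSet := hsupp.trans hqG
  have hsum : ∑ e, p e = ∑ e, q e := by
    have hdiag : ∀ f : Sym2 (Fin N) → ℝ, Function.support f ⊆ G.edgeSet →
        ∀ e, e.IsDiag → f e = 0 := fun f hf e he =>
      Function.notMem_support.1 fun h => G.not_isDiag_of_mem_edgeSet (hf h) he
    have := sum_linearCombination_rho (hdiag p hpG)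
    rw [hpq, sum_linearCombination_rho (hdiag q hqG)] at this
    linarith
  have hfract : ∀ e, Int.fract (p e) = 0 :=
    fract_eq_zero_of_linearIndepOn_support hG hpG hind (by rwa [hpq]) (by rwa [hsum])
  have hnat : (fun e => ((⌊p e⌋₊ : ℕ) : ℝ)) = p := by
    funext e
    obtain ⟨z, hz⟩ := Int.fract_eq_zero_iff.1 (hfract e)
    rw [natCast_floor_eq_intCast_floor (hp e), ← hz, Int.floor_intCast]
  refine ⟨fun e => ⌊p e⌋₊, fun e he => hpG fun h => he (by simp [h]), ?_, ?_⟩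
  · rw [hnat, hpq]
  · rw [← hsum]
    exact Finset.sum_congr rfl fun e _ => congrFun hnat e

/-- The exponent of the monomial `t_i t_j s` attached to the edge `{i, j}`. -/
noncomputable def edgeExp {V : Type*} (e : Sym2 V) : Option V →₀ ℕ :=
  Sym2.lift ⟨fun i j => Finsupp.single (some i) 1 + Finsupp.single (some j) 1 +
    Finsupp.single none 1, fun i j => by
      beta_reduce
      rw [add_comm (Finsupp.single (some i) 1)]⟩ e

/-- The monoid of the exponents of the monomials in the edge ring. -/
noncomputable def edgeMonoid {V : Type*} (G : SimpleGraph V) : AddSubmonoid (Option V →₀ ℕ) :=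
  AddSubmonoid.closure (edgeExp '' G.edgeSet)

theorem edgeMonom_eq_monomial (K : Type*) [Field K] {V : Type*} (e : Sym2 V) :
    edgeMonom K e = monomial (edgeExp e) 1 := by
  induction e with
  | _ a b => simp [edgeMonom, edgeExp, X, monomial_mul]

theorem edgeRing_eq_supportSubalgebra (K : Type*) [Field K] {V : Type*} (G : SimpleGraph V) :
    edgeRing K G = supportSubalgebra K (edgeMonoid G) := by
  rw [edgeMonoid, ← adjoin_monomial_image, Set.image_image, edgeRing]
  simp only [← edgeMonom_eq_monomial]

theorem mem_edgeMonoid_iff {x : Option (Fin N) →₀ ℕ} :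
    x ∈ edgeMonoid G ↔ ∃ f : Sym2 (Fin N) → ℕ, Function.support f ⊆ G.edgeSet ∧
      Fintype.linearCombination ℕ edgeExp f = x := by
  rw [edgeMonoid, ← Submodule.span_nat_eq_addSubmonoidClosure, Submodule.mem_toAddSubmonoid,
    Finsupp.mem_span_image_iff_linearCombination]
  refine Finsupp.equivFunOnFinite.exists_congr fun l => ?_
  change _ ↔ Function.support l ⊆ _ ∧ Fintype.linearCombination ℕ edgeExp l = x
  rw [Finsupp.mem_supported, ← Finsupp.fun_support_eq,
    ← Finsupp.linearCombination_eq_fintype_linearCombination_apply ℕ edgeExp,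
    Finsupp.linearEquivFunOnFinite_symm_coe]

theorem linearCombination_edgeExp_none (f : Sym2 (Fin N) → ℕ) :
    Fintype.linearCombination ℕ edgeExp f none = ∑ e, f e := by
  have hnone : ∀ e : Sym2 (Fin N), edgeExp e none = 1 := fun e => by
    induction e with
    | _ a b => simp [edgeExp]
  simp [Fintype.linearCombination_apply, Finsupp.finsetSum_apply, hnone]

theorem linearCombination_edgeExp_some {f : Sym2 (Fin N) → ℕ} (hf : Function.support f ⊆ G.edgeSet)
    (i : Fin N) : (Fintype.linearCombination ℕ edgeExp f (some i) : ℝ) =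
      Fintype.linearCombination ℝ rho (fun e => (f e : ℝ)) i := by
  have hsome : ∀ e ∈ G.edgeSet, (edgeExp e (some i) : ℝ) = rho e i := fun e he => by
    induction e with
    | _ a b =>
    have hab : G.Adj a b := he
    simp [rho_mk hab.ne, edgeExp, Finsupp.single_apply, Pi.single_apply, eq_comm]
  simp only [Fintype.linearCombination_apply, Finsupp.finsetSum_apply, Finset.sum_apply,
    Nat.cast_sum]
  refine Finset.sum_congr rfl fun e _ => ?_
  by_cases he : f e = 0
  · simp [he]
  · simp [← hsome e (hf he)]

theorem isSaturated_edgeMonoid (hG : OddCyclesIntersect G) : IsSaturated (edgeMonoid G) := by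
  intro _ _ c _ k hk hkc
  have hk0 : (k : ℝ) ≠ 0 := Nat.cast_ne_zero.2 hk.ne'
  obtain ⟨f, hf, hfc⟩ := mem_edgeMonoid_iff.1 hkc
  let q : Sym2 (Fin N) → ℝ := (k : ℝ)⁻¹ • fun e => (f e : ℝ)
  have hq : 0 ≤ q := smul_nonneg (by positivity) fun e => Nat.cast_nonneg _
  have hqG : Function.support q ⊆ G.edgeSet := fun e he => hf fun h => he (by simp [q, h])
  have hqc : ∀ i, Fintype.linearCombination ℝ rho q i = c (some i) := fun i => by
    rw [map_smul, Pi.smul_apply, ← linearCombination_edgeExp_some hf, hfc]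
    simp [hk0]
  have hqtot : ∑ e, q e = c none := by
    simp only [q, Pi.smul_apply, ← Finset.smul_sum]
    rw [← Nat.cast_sum, ← linearCombination_edgeExp_none, hfc]
    simp [hk0]
  obtain ⟨n, hn, hnq, hntot⟩ := exists_nat_linearCombination_rho_eq hG hq hqG
    (fun i => ⟨c (some i), by simp [hqc]⟩) ⟨c none, by simp [hqtot]⟩
  refine mem_edgeMonoid_iff.2 ⟨n, hn, Finsupp.ext fun i => ?_⟩
  cases i with
  | none =>
    rw [linearCombination_edgeExp_none]
    exact_mod_cast hntot.trans hqtot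
  | some i =>
    have := (linearCombination_edgeExp_some hn i).trans ((congrFun hnq i).trans (hqc i))
    exact_mod_cast this

theorem isIntegrallyClosed_edgeRing (K : Type*) [Field K] (hG : OddCyclesIntersect G) :
    IsIntegrallyClosed (edgeRing K G) := by
  classical
  let _ : LinearOrder (Option (Fin N)) := linearOrderOfSTO WellOrderingRel
  have hfg : (edgeMonoid G).FG :=
    (AddSubmonoid.fg_iff _).2 ⟨_, rfl, G.edgeSet.toFinite.image _⟩
  rw [edgeRing_eq_supportSubalgebra]
  exact isIntegrallyClosed_supportSubalgebra hfg (isSaturated_edgeMonoid hG) MonomialOrder.lex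

end EdgeRing

/-! ### Cells of a regular triangulation -/

section Cells

open Topology

variable {E V : Type*} [AddCommGroup V] [Module ℝ V]

/-- A basis of the ambient space consisting of members of the family `v`. It is encoded by the set
of indices, so that two of them are equal as soon as their index sets are. -/
@[ext]
structure SubBasis (v : E → V) where
  carrier : Finset E
  linearIndepOn : LinearIndepOn ℝ v (carrier : Set E)
  span_eq_top : Submodule.span ℝ (v '' carrier) = ⊤

namespace SubBasis

variable {v : E → V}

instance [Finite E] : Finite (SubBasis v) :=
  Finite.of_injective carrier fun _ _ => SubBasis.ext

theorem exists_subset_carrier [Finite E] (hspan : Submodule.span ℝ (Set.range v) = ⊤) {s : Set E}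
    (hs : LinearIndepOn ℝ v s) : ∃ B : SubBasis v, s ⊆ B.carrier := by
  obtain ⟨b, -, hsb, hb, hind⟩ := exists_linearIndepOn_extension hs (Set.subset_univ s)
  refine ⟨⟨b.toFinite.toFinset, by simpa using hind, ?_⟩, by simpa using hsb⟩
  rw [Set.Finite.coe_toFinset, ← top_le_iff, ← hspan, Submodule.span_le]
  simpa using hb

/-- The elements of `B` as a basis indexed by its carrier. -/
noncomputable def toBasis (B : SubBasis v) : Module.Basis B.carrier ℝ V :=
  Module.Basis.mk (v := fun e : B.carrier => v e) B.linearIndepOn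
    (by rw [← B.span_eq_top, Set.image_eq_range]; rfl)

theorem toBasis_apply (B : SubBasis v) (e : B.carrier) : B.toBasis e = v e :=
  Module.Basis.mk_apply _ _ e

theorem card_carrier (B : SubBasis v) : B.carrier.card = Module.finrank ℝ V := by
  rw [Module.finrank_eq_card_basis B.toBasis, Fintype.card_coe]

/-- The coordinates with respect to `B`, extended by zero to all indices. -/
noncomputable def coord (B : SubBasis v) : V →ₗ[ℝ] E → ℝ :=
  Function.ExtendByZero.linearMap ℝ ((↑) : B.carrier → E) ∘ₗ B.toBasis.equivFun

theorem coord_apply_coe (B : SubBasis v) (x : V) (e : B.carrier) :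
    B.coord x e = B.toBasis.repr x e :=
  Subtype.val_injective.extend_apply _ _ _

theorem coord_of_notMem (B : SubBasis v) (x : V) {e : E} (he : e ∉ B.carrier) :
    B.coord x e = 0 :=
  Function.extend_apply' _ _ _ (by rintro ⟨f, rfl⟩; exact he f.2)

theorem coord_self [DecidableEq E] (B : SubBasis v) {e : E} (he : e ∈ B.carrier) :
    B.coord (v e) = Pi.single e 1 := by
  funext f
  by_cases hf : f ∈ B.carrier
  · rw [← B.toBasis_apply ⟨e, he⟩, B.coord_apply_coe _ ⟨f, hf⟩, Module.Basis.repr_self]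
    simp [Finsupp.single_apply, Pi.single_apply, eq_comm]
  · rw [B.coord_of_notMem _ hf, Pi.single_eq_of_ne]
    rintro rfl
    exact hf he

theorem coord_nonneg {B : SubBasis v} {x : V} (hx : ∀ e ∈ B.carrier, 0 < B.coord x e) :
    0 ≤ B.coord x := fun e => by
  by_cases he : e ∈ B.carrier
  · exact (hx e he).le
  · exact (B.coord_of_notMem x he).ge

section Fintype

variable [Fintype E]

theorem linearCombination_coord (B : SubBasis v) (x : V) :
    Fintype.linearCombination ℝ v (B.coord x) = x := by
  rw [Fintype.linearCombination_apply, ← Finset.sum_subset (Finset.subset_univ B.carrier)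
    (fun e _ he => by rw [B.coord_of_notMem x he, zero_smul]), ← Finset.sum_coe_sort]
  conv_rhs => rw [← B.toBasis.sum_repr x]
  simp only [B.coord_apply_coe, B.toBasis_apply]

theorem coord_linearCombination (B : SubBasis v) {q : E → ℝ}
    (hq : Function.support q ⊆ B.carrier) :
    B.coord (Fintype.linearCombination ℝ v q) = q := by
  classical
  rw [Fintype.linearCombination_apply, map_sum]
  conv_rhs => rw [← Finset.univ_sum_single q]
  refine Finset.sum_congr rfl fun e _ => ?_
  by_cases he : q e = 0
  · simp [he]
  · rw [map_smul, B.coord_self (hq he), ← Pi.single_smul, smul_eq_mul, mul_one]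

/-- `B` spans a cell of the regular triangulation of the cone over `v` with heights `w`: all other
vectors lie strictly above the hyperplane through the lifts of the elements of `B`. -/
def IsCell (B : SubBasis v) (w : E → ℝ) : Prop :=
  ∀ f ∉ B.carrier, w ⬝ᵥ B.coord (v f) < w f

theorem IsCell.dotProduct_coord_lt {B : SubBasis v} {w : E → ℝ} (hB : B.IsCell w) {q : E → ℝ}
    (hq : 0 ≤ q) {f : E} (hf : 0 < q f) (hfB : f ∉ B.carrier) :
    w ⬝ᵥ B.coord (Fintype.linearCombination ℝ v q) < w ⬝ᵥ q := by
  classical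
  have hle : ∀ e, w ⬝ᵥ B.coord (v e) ≤ w e := fun e => by
    by_cases he : e ∈ B.carrier
    · rw [B.coord_self he, dotProduct_single_one]
    · exact (hB e he).le
  rw [Fintype.linearCombination_apply, map_sum, dotProduct_sum]
  simp only [map_smul, dotProduct_smul, smul_eq_mul, dotProduct_comm w q]
  exact Finset.sum_lt_sum (fun e _ => mul_le_mul_of_nonneg_left (hle e) (hq e))
    ⟨f, Finset.mem_univ f, mul_lt_mul_of_pos_left (hB f hfB) hf⟩

theorem IsCell.eq_of_coord_pos {B B' : SubBasis v} {w : E → ℝ} (hB : B.IsCell w)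
    (hB' : B'.IsCell w) {x : V} (hx : ∀ e ∈ B.carrier, 0 < B.coord x e)
    (hx' : ∀ e ∈ B'.carrier, 0 < B'.coord x e) : B = B' := by
  have hlt : ∀ {A A' : SubBasis v}, A'.IsCell w → (∀ e ∈ A.carrier, 0 < A.coord x e) →
      ¬ A.carrier ⊆ A'.carrier → w ⬝ᵥ A'.coord x < w ⬝ᵥ A.coord x := by
    intro A A' hA' hA hsub
    obtain ⟨e, he, he'⟩ := Finset.not_subset.1 hsub
    simpa only [A.linearCombination_coord] using
      hA'.dotProduct_coord_lt (coord_nonneg hA) (hA e he) he'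
  have hcard : B.carrier.card = B'.carrier.card := by rw [B.card_carrier, B'.card_carrier]
  by_contra hne
  refine lt_asymm (hlt hB' hx fun h => hne ?_) (hlt hB hx' fun h => hne ?_)
  · exact SubBasis.ext (Finset.eq_of_subset_of_card_le h hcard.ge)
  · exact SubBasis.ext (Finset.eq_of_subset_of_card_le h hcard.le).symm

end Fintype

end SubBasis

variable [Fintype E] {v : E → V}

theorem mem_hull_range_iff {x : V} : x ∈ PointedCone.hull ℝ (Set.range v) ↔
    ∃ q : E → ℝ, 0 ≤ q ∧ Fintype.linearCombination ℝ v q = x := by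
  rw [PointedCone.hull, Submodule.mem_span_range_iff_exists_fun]
  constructor
  · rintro ⟨c, rfl⟩
    exact ⟨fun e => c e, fun e => (c e).2, rfl⟩
  · rintro ⟨q, hq, rfl⟩
    exact ⟨fun e => ⟨q e, hq e⟩, rfl⟩

theorem exists_subBasis_dotProduct_coord_le (hspan : Submodule.span ℝ (Set.range v) = ⊤)
    {w : E → ℝ} (hw : ∀ e, 0 < w e) {q : E → ℝ} (hq : 0 ≤ q) :
    ∃ B : SubBasis v, 0 ≤ B.coord (Fintype.linearCombination ℝ v q) ∧
      w ⬝ᵥ B.coord (Fintype.linearCombination ℝ v q) ≤ w ⬝ᵥ q := by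
  obtain ⟨q', hq', hqq', hcost, -, hind⟩ := exists_linearIndepOn_support_of_cost_le (v := v) hw hq
  obtain ⟨B, hB⟩ := SubBasis.exists_subset_carrier hspan hind
  refine ⟨B, ?_⟩
  rw [← hqq', B.coord_linearCombination hB]
  exact ⟨hq', hcost⟩

theorem exists_pos_nonneg_add_smul {ι : Type*} [Finite ι] {q z : ι → ℝ} (hq : 0 ≤ q)
    (hz : ∀ i, z i < 0 → 0 < q i) : ∃ ε : ℝ, 0 < ε ∧ 0 ≤ q + ε • z := by
  have hev : ∀ᶠ ε in 𝓝[>] (0 : ℝ), ∀ e, 0 ≤ q e + ε * z e := by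
    refine Filter.eventually_all.2 fun e => ?_
    by_cases he : z e < 0
    · have hc : Filter.Tendsto (fun ε : ℝ => q e + ε * z e) (𝓝[>] 0) (𝓝 (q e + 0 * z e)) :=
        (Continuous.tendsto (by fun_prop) 0).mono_left nhdsWithin_le_nhds
      rw [zero_mul, add_zero] at hc
      exact (hc.eventually_const_lt (hz e he)).mono fun _ => le_of_lt
    · filter_upwards [self_mem_nhdsWithin] with ε hε
      exact add_nonneg (hq e) (mul_nonneg (le_of_lt hε) (not_lt.1 he))
  obtain ⟨ε, hε, hε0⟩ := (hev.and self_mem_nhdsWithin).exists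
  exact ⟨ε, hε0, hε⟩

/-- The heights `w` are generic: no vector lies on the hyperplane through the lifts of a basis not
containing it. -/
def IsGenericWeight (v : E → V) (w : E → ℝ) : Prop :=
  ∀ B : SubBasis v, ∀ f ∉ B.carrier, w ⬝ᵥ B.coord (v f) ≠ w f

/-- The vector `u` is generic: it lies on no hyperplane spanned by members of a basis. -/
def IsGenericVector (v : E → V) (u : V) : Prop :=
  ∀ B : SubBasis v, ∀ e ∈ B.carrier, B.coord u e ≠ 0

-- Linear programming: among the bases representing `x` with nonnegative coordinates, one of
-- minimal cost spans a cell, since pivoting to a vector violating the cell condition would lower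
-- the cost.
theorem exists_isCell_coord_pos (hspan : Submodule.span ℝ (Set.range v) = ⊤) {w : E → ℝ}
    (hw : ∀ e, 0 < w e) (hgen : IsGenericWeight v w) {x : V}
    (hx : x ∈ PointedCone.hull ℝ (Set.range v)) (hxgen : IsGenericVector v x) :
    ∃ B : SubBasis v, B.IsCell w ∧ ∀ e ∈ B.carrier, 0 < B.coord x e := by
  classical
  obtain ⟨q₀, hq₀, rfl⟩ := mem_hull_range_iff.1 hx
  set x := Fintype.linearCombination ℝ v q₀
  obtain ⟨B₀, hB₀, -⟩ := exists_subBasis_dotProduct_coord_le hspan hw hq₀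
  obtain ⟨B, hB, hmin⟩ := Set.exists_min_image {B : SubBasis v | 0 ≤ B.coord x}
    (fun B => w ⬝ᵥ B.coord x) (Set.toFinite _) ⟨B₀, hB₀⟩
  have hpos : ∀ e ∈ B.carrier, 0 < B.coord x e := fun e he => (hB e).lt_of_ne' (hxgen B e he)
  refine ⟨B, fun f hf => ?_, hpos⟩
  by_contra! hle
  have hlt : w f < w ⬝ᵥ B.coord (v f) := hle.lt_of_ne' (hgen B f hf)
  let z : E → ℝ := Pi.single f 1 - B.coord (v f)
  have hz : ∀ e, z e < 0 → 0 < B.coord x e := by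
    intro e he
    by_contra hne
    have hsingle : (0 : ℝ) ≤ (Pi.single f 1 : E → ℝ) e :=
      (Pi.single_nonneg.2 zero_le_one : (0 : E → ℝ) ≤ Pi.single f 1) e
    have hzero := B.coord_of_notMem (v f) fun h => hne (hpos e h)
    simp only [z, Pi.sub_apply, hzero, sub_zero] at he
    exact he.not_ge hsingle
  obtain ⟨ε, hε, hnonneg⟩ := exists_pos_nonneg_add_smul hB hz
  have hx' : Fintype.linearCombination ℝ v (B.coord x + ε • z) = x := by
    simp only [z, map_add, map_smul, map_sub, B.linearCombination_coord,
      Fintype.linearCombination_apply_single, one_smul, sub_self, smul_zero, add_zero]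
  obtain ⟨B', hB', hcost⟩ := exists_subBasis_dotProduct_coord_le hspan hw hnonneg
  rw [hx'] at hB' hcost
  have hdot : w ⬝ᵥ (B.coord x + ε • z) = w ⬝ᵥ B.coord x - ε * (w ⬝ᵥ B.coord (v f) - w f) := by
    rw [dotProduct_add, dotProduct_smul, dotProduct_sub, dotProduct_single_one, smul_eq_mul]
    ring
  have := hmin B' hB'
  have := mul_pos hε (sub_pos.2 hlt)
  linarith

theorem exists_pos_forall_dotProduct_ne_zero {ι : Type*} [Finite ι] (φ : ι → E → ℝ)
    (hφ : ∀ i, φ i ≠ 0) : ∃ a : E → ℝ, (∀ e, 0 < a e) ∧ ∀ i, φ i ⬝ᵥ a ≠ 0 := by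
  classical
  have := Fintype.ofFinite ι
  let p : ι → MvPolynomial E ℝ := fun i => ∑ e, C (φ i e) * X e
  have hp : ∀ i a, eval a (p i) = φ i ⬝ᵥ a := fun i a => by simp [p, dotProduct]
  have hprod : ∏ i, p i ≠ 0 := Finset.prod_ne_zero_iff.2 fun i _ h => hφ i <| by
    funext e
    rw [← dotProduct_single_one (φ i) e, ← hp, h, map_zero, Pi.zero_apply]
  by_contra! hcon
  refine hprod (MvPolynomial.funext_set (fun _ => Set.Ioi (0 : ℝ)) (fun _ => Set.Ioi_infinite 0)
    fun a ha => ?_)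
  obtain ⟨i, hi⟩ := hcon a fun e => ha e (Set.mem_univ e)
  rw [map_prod, map_zero]
  exact Finset.prod_eq_zero (Finset.mem_univ i) ((hp i a).trans hi)

theorem exists_isGenericWeight (v : E → V) :
    ∃ w : E → ℝ, (∀ e, 0 < w e) ∧ IsGenericWeight v w := by
  classical
  obtain ⟨w, hw0, hw⟩ := exists_pos_forall_dotProduct_ne_zero
    (fun p : {p : SubBasis v × E // p.2 ∉ p.1.carrier} =>
      Pi.single p.1.2 1 - p.1.1.coord (v p.1.2)) fun ⟨⟨B, f⟩, hf⟩ h => by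
        simpa [B.coord_of_notMem _ hf] using congrFun h f
  refine ⟨w, hw0, fun B f hf h => hw ⟨⟨B, f⟩, hf⟩ ?_⟩
  rw [dotProduct_comm, dotProduct_sub, dotProduct_single_one, h, sub_self]

theorem exists_isGenericVector {ι : Type*} [Finite ι] (v : ι → V) :
    ∃ u ∈ PointedCone.hull ℝ (Set.range v), IsGenericVector v u := by
  classical
  have := Fintype.ofFinite ι
  obtain ⟨a, ha, h⟩ := exists_pos_forall_dotProduct_ne_zero
    (fun (p : {p : SubBasis v × ι // p.2 ∈ p.1.carrier}) f => p.1.1.coord (v f) p.1.2)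
    fun ⟨⟨B, e⟩, he⟩ h => by simpa [B.coord_self he] using congrFun h e
  refine ⟨_, mem_hull_range_iff.2 ⟨a, fun e => (ha e).le, rfl⟩, fun B e he h0 => h ⟨⟨B, e⟩, he⟩ ?_⟩
  simpa [Fintype.linearCombination_apply, dotProduct, mul_comm] using h0

end Cells

/-! ### Half-open cells -/

section HalfOpen

open Topology

variable {E V : Type*} [AddCommGroup V] [Module ℝ V] {v : E → V}

/-- `x` lies in the half-open cone over `B` determined by `u`: for small `ε > 0` all coordinates
of `x + ε u` in `B` are positive. -/
def SubBasis.LexPos (B : SubBasis v) (x u : V) : Prop :=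
  ∀ e ∈ B.carrier, 0 < B.coord x e ∨ B.coord x e = 0 ∧ 0 < B.coord u e

theorem eventually_add_mul_pos_iff (a : ℝ) {b : ℝ} (hb : b ≠ 0) :
    ∀ᶠ ε in 𝓝[>] (0 : ℝ), a + ε * b ≠ 0 ∧ (0 < a + ε * b ↔ 0 < a ∨ a = 0 ∧ 0 < b) := by
  have hc : Filter.Tendsto (fun ε : ℝ => a + ε * b) (𝓝[>] 0) (𝓝 (a + 0 * b)) :=
    (Continuous.tendsto (by fun_prop) 0).mono_left nhdsWithin_le_nhds
  rw [zero_mul, add_zero] at hc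
  rcases lt_trichotomy a 0 with h | rfl | h
  · filter_upwards [hc.eventually_lt_const h] with ε hε
    exact ⟨hε.ne, by grind⟩
  · filter_upwards [self_mem_nhdsWithin] with ε hε
    have hε' : 0 < ε := hε
    simp [hε'.ne', hb, mul_pos_iff_of_pos_left hε']
  · filter_upwards [hc.eventually_const_lt h] with ε hε
    exact ⟨hε.ne', by grind⟩

theorem eventually_isGenericVector_and_lexPos_iff [Finite E] (x : V) {u : V}
    (hu : IsGenericVector v u) :
    ∀ᶠ ε in 𝓝[>] (0 : ℝ), IsGenericVector v (x + ε • u) ∧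
      ∀ B : SubBasis v, (∀ e ∈ B.carrier, 0 < B.coord (x + ε • u) e) ↔ B.LexPos x u := by
  have hev : ∀ᶠ ε in 𝓝[>] (0 : ℝ), ∀ (B : SubBasis v) (e : E), e ∈ B.carrier →
      B.coord (x + ε • u) e ≠ 0 ∧ (0 < B.coord (x + ε • u) e ↔
        0 < B.coord x e ∨ B.coord x e = 0 ∧ 0 < B.coord u e) := by
    refine Filter.eventually_all.2 fun B => Filter.eventually_all.2 fun e => ?_
    by_cases he : e ∈ B.carrier
    · filter_upwards [eventually_add_mul_pos_iff (B.coord x e) (hu B e he)] with ε hε _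
      simpa using hε
    · exact Filter.Eventually.of_forall fun _ h => absurd h he
  exact hev.mono fun ε h => ⟨fun B e he => (h B e he).1, fun B =>
    forall₂_congr fun e he => (h B e he).2⟩

variable [Fintype E]

theorem exists_isCell_lexPos (hspan : Submodule.span ℝ (Set.range v) = ⊤) {w : E → ℝ}
    (hw : ∀ e, 0 < w e) (hgen : IsGenericWeight v w) {x u : V} (hu : IsGenericVector v u)
    (hx : ∀ᶠ ε in 𝓝[>] (0 : ℝ), x + ε • u ∈ PointedCone.hull ℝ (Set.range v)) :
    ∃ B : SubBasis v, B.IsCell w ∧ B.LexPos x u := by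
  obtain ⟨ε, hmem, hgenε, hiff⟩ :=
    (hx.and (eventually_isGenericVector_and_lexPos_iff x hu)).exists
  obtain ⟨B, hB, hpos⟩ := exists_isCell_coord_pos hspan hw hgen hmem hgenε
  exact ⟨B, hB, (hiff B).1 hpos⟩

theorem SubBasis.IsCell.eq_of_lexPos {w : E → ℝ} {x u : V} (hu : IsGenericVector v u)
    {B B' : SubBasis v} (hB : B.IsCell w) (hB' : B'.IsCell w) (hx : B.LexPos x u)
    (hx' : B'.LexPos x u) : B = B' := by
  obtain ⟨ε, -, hiff⟩ := (eventually_isGenericVector_and_lexPos_iff x hu).exists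
  exact hB.eq_of_coord_pos hB' ((hiff B).2 hx) ((hiff B').2 hx')

end HalfOpen

/-! ### Lattice points in half-open boxes -/

section IntPart

variable {E V : Type*} [AddCommGroup V] [Module ℝ V] {v : E → V}

namespace SubBasis

/-- The integral parts of the coordinates of `x` in `B`, adapted to the half-open cone of direction
`u`: the corresponding fractional parts lie in `[0, 1)` where `u` is nonnegative and in `(0, 1]`
where it is negative. -/
noncomputable def intPart (B : SubBasis v) (u x : V) (e : E) : ℤ :=
  if B.coord u e < 0 then ⌈B.coord x e⌉ - 1 else ⌊B.coord x e⌋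

theorem intPart_of_notMem (B : SubBasis v) (u x : V) {e : E} (he : e ∉ B.carrier) :
    B.intPart u x e = 0 := by
  simp [intPart, B.coord_of_notMem _ he]

theorem lexPos_iff_intPart_nonneg (B : SubBasis v) {u : V} (hu : IsGenericVector v u) (x : V) :
    B.LexPos x u ↔ 0 ≤ B.intPart u x := by
  refine forall_congr' fun e => ?_
  by_cases he : e ∈ B.carrier
  · rw [forall_prop_of_true he, intPart]
    split_ifs with h
    · simp only [not_lt_of_gt h, and_false, or_false, Pi.zero_apply, sub_nonneg,
        Int.one_le_ceil_iff]
    · have hpos : 0 < B.coord u e := (not_lt.1 h).lt_of_ne' (hu B e he)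
      rw [Pi.zero_apply, Int.floor_nonneg, le_iff_lt_or_eq, eq_comm (a := (0 : ℝ))]
      simp only [hpos, and_true]
  · simp [he, B.intPart_of_notMem]

theorem coord_mem_Icc_of_intPart_eq_zero (B : SubBasis v) {u x : V} (h : B.intPart u x = 0)
    (e : E) : B.coord x e ∈ Set.Icc 0 1 := by
  have he := congrFun h e
  rw [intPart, Pi.zero_apply] at he
  split_ifs at he
  · rw [sub_eq_zero, Int.ceil_eq_iff, Int.cast_one, sub_self] at he
    exact ⟨he.1.le, he.2⟩
  · rw [Int.floor_eq_zero_iff] at he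
    exact ⟨he.1, he.2.le⟩

theorem intPart_add_linearCombination [Fintype E] (B : SubBasis v) (u x : V) {n : E → ℤ}
    (hn : Function.support n ⊆ B.carrier) :
    B.intPart u (x + Fintype.linearCombination ℝ v fun e => (n e : ℝ)) = B.intPart u x + n := by
  have hcoord : B.coord (Fintype.linearCombination ℝ v fun e => (n e : ℝ)) = fun e => (n e : ℝ) :=
    B.coord_linearCombination fun e he => hn fun h => he (by simp [h])
  funext e
  simp only [intPart, map_add, hcoord, Pi.add_apply, Int.floor_add_intCast, Int.ceil_add_intCast]
  split_ifs <;> ring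

theorem intPart_sub_linearCombination_intPart [Fintype E] (B : SubBasis v) (u x : V) :
    B.intPart u (x - Fintype.linearCombination ℝ v fun e => (B.intPart u x e : ℝ)) = 0 := by
  have h := B.intPart_add_linearCombination u
    (x - Fintype.linearCombination ℝ v fun e => (B.intPart u x e : ℝ)) fun e he =>
      not_not.1 (mt (B.intPart_of_notMem u x) he)
  rw [sub_add_cancel] at h
  exact right_eq_add.1 h

end SubBasis

end IntPart

section BoxPoint

variable {E V : Type*} [AddCommGroup V] [Module ℝ V]

/-- A lattice point with vanishing integral parts with respect to a cell of the triangulation with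
heights `w`, that is, lying in the half-open parallelepiped spanned by the cell. It is recorded
together with its cell, and only if its height `ht` is a natural number. -/
structure BoxPoint (v : E → V) (Λ : AddSubgroup V) (ht : V →ₗ[ℝ] ℝ) (w : E → ℝ) (u : V)
    [Fintype E] where
  cell : SubBasis v
  isCell : cell.IsCell w
  point : V
  point_mem : point ∈ Λ
  intPart_eq_zero : cell.intPart u point = 0
  height : ℕ
  height_eq : ht point = height

/-- The lattice points of height `t` in the cone over `v`. -/
def conePoints (v : E → V) (Λ : AddSubgroup V) (ht : V →ₗ[ℝ] ℝ) (t : ℕ) : Set V :=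
  {x | x ∈ PointedCone.hull ℝ (Set.range v) ∧ x ∈ Λ ∧ ht x = t}

variable [Fintype E] {v : E → V} {Λ : AddSubgroup V} {ht : V →ₗ[ℝ] ℝ} {w : E → ℝ} {u : V}

theorem linearCombination_intCast_mem (hv : ∀ e, v e ∈ Λ) (n : E → ℤ) :
    Fintype.linearCombination ℝ v (fun e => (n e : ℝ)) ∈ Λ := by
  simp only [Fintype.linearCombination_apply, Int.cast_smul_eq_zsmul]
  exact sum_mem fun e _ => zsmul_mem (hv e) (n e)

theorem map_linearCombination_eq_sum (hht : ∀ e, ht (v e) = 1) (q : E → ℝ) :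
    ht (Fintype.linearCombination ℝ v q) = ∑ e, q e := by
  simp [Fintype.linearCombination_apply, hht]

namespace BoxPoint

theorem ext_cell_point {p p' : BoxPoint v Λ ht w u} (hcell : p.cell = p'.cell)
    (hpoint : p.point = p'.point) : p = p' := by
  have hheight : p.height = p'.height := by
    rw [← Nat.cast_inj (R := ℝ), ← p.height_eq, ← p'.height_eq, hpoint]
  cases p
  cases p'
  subst hcell hpoint hheight
  rfl

theorem coord_mem_Icc (p : BoxPoint v Λ ht w u) (e : E) : p.cell.coord p.point e ∈ Set.Icc 0 1 :=
  p.cell.coord_mem_Icc_of_intPart_eq_zero p.intPart_eq_zero e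

theorem point_mem_hull (p : BoxPoint v Λ ht w u) : p.point ∈ PointedCone.hull ℝ (Set.range v) :=
  mem_hull_range_iff.2 ⟨_, fun e => (p.coord_mem_Icc e).1, p.cell.linearCombination_coord _⟩

/-- The translate of a box point by a natural combination of the vectors `v e`. -/
noncomputable def translate (p : BoxPoint v Λ ht w u) (n : E → ℕ) : V :=
  p.point + Fintype.linearCombination ℝ v fun e => ((n e : ℤ) : ℝ)

theorem intPart_translate (p : BoxPoint v Λ ht w u) {n : E → ℕ}
    (hn : Function.support n ⊆ p.cell.carrier) :
    p.cell.intPart u (p.translate n) = fun e => (n e : ℤ) := by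
  rw [translate, p.cell.intPart_add_linearCombination u _ fun e he => hn fun h => he (by simp [h]),
    p.intPart_eq_zero, zero_add]

theorem translate_mem_conePoints_iff (hv : ∀ e, v e ∈ Λ) (hht : ∀ e, ht (v e) = 1)
    (p : BoxPoint v Λ ht w u) (n : E → ℕ) (t : ℕ) :
    p.translate n ∈ conePoints v Λ ht t ↔ p.height + ∑ e, n e = t := by
  have hhull : p.translate n ∈ PointedCone.hull ℝ (Set.range v) :=
    add_mem p.point_mem_hull (mem_hull_range_iff.2 ⟨_, fun e => by positivity, rfl⟩)
  have hmem : p.translate n ∈ Λ := add_mem p.point_mem (linearCombination_intCast_mem hv _)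
  have hheight : ht (p.translate n) = ((p.height + ∑ e, n e : ℕ) : ℝ) := by
    rw [translate, map_add, p.height_eq, map_linearCombination_eq_sum hht]
    push_cast
    rfl
  simp only [conePoints, Set.mem_ofPred_eq, hhull, hmem, true_and, hheight, Nat.cast_inj]

theorem translate_injective (hu : IsGenericVector v u) {p p' : BoxPoint v Λ ht w u} {n n' : E → ℕ}
    (hn : Function.support n ⊆ p.cell.carrier) (hn' : Function.support n' ⊆ p'.cell.carrier)
    (h : p.translate n = p'.translate n') : p = p' ∧ n = n' := by
  have hint := p.intPart_translate hn
  have hint' := p'.intPart_translate hn'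
  rw [← h] at hint'
  have hnonneg (m : E → ℕ) : (0 : E → ℤ) ≤ fun e => (m e : ℤ) := fun e => Int.natCast_nonneg (m e)
  have hcell : p.cell = p'.cell := p.isCell.eq_of_lexPos hu p'.isCell
    ((p.cell.lexPos_iff_intPart_nonneg hu _).2 ((hnonneg n).trans_eq hint.symm))
    ((p'.cell.lexPos_iff_intPart_nonneg hu _).2 ((hnonneg n').trans_eq hint'.symm))
  rw [← hcell, hint] at hint'
  obtain rfl : n = n' := funext fun e => Int.ofNat_inj.1 (congrFun hint' e)
  exact ⟨ext_cell_point hcell (add_right_cancel h), rfl⟩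

theorem exists_point_eq_sub (hv : ∀ e, v e ∈ Λ) (hht : ∀ e, ht (v e) = 1) {B : SubBasis v}
    (hB : B.IsCell w) (u : V) {x : V} (hx : x ∈ Λ) {k : ℤ} (hk : ht x = k) :
    ∃ p : BoxPoint v Λ ht w u, p.cell = B ∧
      p.point = x - Fintype.linearCombination ℝ v (fun e => (B.intPart u x e : ℝ)) ∧
      (p.height : ℤ) = k - ∑ e, B.intPart u x e := by
  let z := x - Fintype.linearCombination ℝ v fun e => (B.intPart u x e : ℝ)
  have hz : B.intPart u z = 0 := B.intPart_sub_linearCombination_intPart u x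
  have hheight : ht z = ((k - ∑ e, B.intPart u x e : ℤ) : ℝ) := by
    rw [map_sub, hk, map_linearCombination_eq_sum hht]
    push_cast
    rfl
  have hnonneg : 0 ≤ ht z := by
    rw [← B.linearCombination_coord z, map_linearCombination_eq_sum hht]
    exact Finset.sum_nonneg fun e _ => (B.coord_mem_Icc_of_intPart_eq_zero hz e).1
  obtain ⟨m, hm⟩ := Int.eq_ofNat_of_zero_le (Int.cast_nonneg_iff.1 (hheight ▸ hnonneg))
  refine ⟨⟨B, hB, z, sub_mem hx (linearCombination_intCast_mem hv _), hz, m, ?_⟩, rfl, rfl, hm.symm⟩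
  rw [hheight, hm, Int.cast_natCast]

theorem exists_translate_eq (hv : ∀ e, v e ∈ Λ) (hht : ∀ e, ht (v e) = 1)
    (hspan : Submodule.span ℝ (Set.range v) = ⊤) (hw : ∀ e, 0 < w e) (hgen : IsGenericWeight v w)
    (hu : IsGenericVector v u) (hucone : u ∈ PointedCone.hull ℝ (Set.range v)) {t : ℕ} {x : V}
    (hx : x ∈ conePoints v Λ ht t) :
    ∃ (p : BoxPoint v Λ ht w u) (n : E → ℕ),
      Function.support n ⊆ p.cell.carrier ∧ p.translate n = x := by
  obtain ⟨hxcone, hxΛ, hxt⟩ := hx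
  obtain ⟨B, hB, hpos⟩ := exists_isCell_lexPos hspan hw hgen hu (x := x) <| by
    filter_upwards [self_mem_nhdsWithin] with ε hε
    exact add_mem hxcone (PointedCone.smul_mem _ (le_of_lt hε) hucone)
  rw [B.lexPos_iff_intPart_nonneg hu] at hpos
  obtain ⟨p, rfl, hp, -⟩ := exists_point_eq_sub hv hht hB u hxΛ (k := t) (by exact_mod_cast hxt)
  refine ⟨p, fun e => (p.cell.intPart u x e).toNat, fun e he => ?_, ?_⟩
  · by_contra hmem
    exact he (by simp only [p.cell.intPart_of_notMem u x hmem, Int.toNat_zero])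
  · simp only [translate, hp, fun e => Int.toNat_of_nonneg (hpos e), sub_add_cancel]

end BoxPoint

theorem card_support_subset_sum_eq (s : Finset E) (m : ℕ) :
    Nat.card {n : E → ℕ // Function.support n ⊆ s ∧ ∑ e, n e = m} = s.card.multichoose m := by
  classical
  rw [← Finset.card_finsuppAntidiag_nat_eq_multichoose, ← Fintype.card_coe,
    ← Nat.card_eq_fintype_card]
  refine Nat.card_congr (Finsupp.equivFunOnFinite.symm.subtypeEquiv fun n => ?_)
  rw [Finset.mem_finsuppAntidiag, ← Finset.coe_subset, ← Finsupp.fun_support_eq, and_comm]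
  refine and_congr_left fun hn => ?_
  rw [← Finset.sum_subset (Finset.subset_univ s) fun e _ he => Function.notMem_support.1 fun h =>
    he (hn h)]
  rfl

-- Every lattice point of the cone is in a unique way a box point plus a natural combination of the
-- members of its cell.
theorem card_conePoints [Fintype (BoxPoint v Λ ht w u)] (hv : ∀ e, v e ∈ Λ)
    (hht : ∀ e, ht (v e) = 1) (hspan : Submodule.span ℝ (Set.range v) = ⊤) (hw : ∀ e, 0 < w e)
    (hgen : IsGenericWeight v w) (hu : IsGenericVector v u)
    (hucone : u ∈ PointedCone.hull ℝ (Set.range v)) (t : ℕ) :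
    Nat.card (conePoints v Λ ht t) = ∑ p : BoxPoint v Λ ht w u,
      if p.height ≤ t then (Module.finrank ℝ V).multichoose (t - p.height) else 0 := by
  classical
  let F (p : BoxPoint v Λ ht w u) :=
    {n : E → ℕ // Function.support n ⊆ p.cell.carrier ∧ p.height + ∑ e, n e = t}
  have hcard (p : BoxPoint v Λ ht w u) : Nat.card (F p) =
      if p.height ≤ t then (Module.finrank ℝ V).multichoose (t - p.height) else 0 := by
    split_ifs with h
    · rw [← p.cell.card_carrier, ← card_support_subset_sum_eq]
      exact Nat.card_congr (Equiv.subtypeEquivRight fun n =>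
        and_congr_right fun _ => by omega)
    · have : IsEmpty (F p) := ⟨fun n => h (n.2.2 ▸ Nat.le_add_right _ _)⟩
      exact Nat.card_of_isEmpty
  have hfin (p : BoxPoint v Λ ht w u) : Finite (F p) :=
    (Set.finite_Icc 0 fun _ : E => t).subset fun n hn => ⟨fun e => Nat.zero_le _, fun e =>
      (Finset.single_le_sum (fun f _ => Nat.zero_le (n f)) (Finset.mem_univ e)).trans
        (hn.2 ▸ Nat.le_add_left _ _)⟩
  let f : (Σ p, F p) → conePoints v Λ ht t := fun s =>
    ⟨s.1.translate s.2.1, (s.1.translate_mem_conePoints_iff hv hht _ t).2 s.2.2.2⟩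
  have hf : Function.Bijective f := by
    constructor
    · rintro ⟨p, n, hn⟩ ⟨p', n', hn'⟩ h
      obtain ⟨rfl, rfl⟩ := BoxPoint.translate_injective hu hn.1 hn'.1 (congrArg Subtype.val h)
      rfl
    · rintro ⟨x, hx⟩
      obtain ⟨p, n, hn, rfl⟩ := BoxPoint.exists_translate_eq hv hht hspan hw hgen hu hucone hx
      exact ⟨⟨p, n, hn, (p.translate_mem_conePoints_iff hv hht n t).1 hx⟩, rfl⟩
  rw [← Nat.card_congr (Equiv.ofBijective f hf), Nat.card_sigma]
  exact Finset.sum_congr rfl fun p _ => hcard p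

end BoxPoint

instance {E V : Type*} [Fintype E] [NormedAddCommGroup V] [NormedSpace ℝ V] [ProperSpace V]
    {v : E → V} {Λ : AddSubgroup V} [DiscreteTopology Λ] {ht : V →ₗ[ℝ] ℝ} {w : E → ℝ} {u : V} :
    Finite (BoxPoint v Λ ht w u) := by
  let K := Fintype.linearCombination ℝ v '' Set.Icc 0 1
  have hK : IsCompact K :=
    isCompact_Icc.image (LinearMap.continuous_of_finiteDimensional _)
  have : Finite ↥(K ∩ Λ) := Metric.finite_isBounded_inter_isClosed DiscreteTopology.isDiscrete
    hK.isBounded AddSubgroup.isClosed_of_discrete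
  refine Finite.of_injective (fun p : BoxPoint v Λ ht w u =>
    ((p.cell, ⟨p.point, ⟨_, ⟨fun e => (p.coord_mem_Icc e).1, fun e => (p.coord_mem_Icc e).2⟩,
      p.cell.linearCombination_coord _⟩, p.point_mem⟩) : SubBasis v × ↥(K ∩ Λ)))
    fun p p' h => ?_
  obtain ⟨hcell, hpoint⟩ := Prod.mk.inj h
  exact BoxPoint.ext_cell_point hcell (congrArg Subtype.val hpoint)

/-! ### The δ-polynomial counts box points -/

section PowerSeriesCoefficients

theorem coeff_one_sub_X_pow (d j : ℕ) :
    PowerSeries.coeff j ((1 - PowerSeries.X : PowerSeries ℤ) ^ d) = (-1) ^ j * d.choose j := by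
  have h : (1 - PowerSeries.X : PowerSeries ℤ) ^ d =
      (((1 + Polynomial.X) ^ d).comp (Polynomial.C (-1) * Polynomial.X) : Polynomial ℤ) := by
    simp [sub_eq_add_neg]
  rw [h, Polynomial.coeff_coe, Polynomial.comp_C_mul_X_coeff, Polynomial.coeff_one_add_X_pow,
    mul_comm]

theorem invOneSubPow_val_eq_mk_multichoose (d : ℕ) :
    (PowerSeries.invOneSubPow ℤ d).val = PowerSeries.mk fun n => (d.multichoose n : ℤ) := by
  cases d with
  | zero =>
    rw [PowerSeries.invOneSubPow_zero, Units.val_one]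
    ext (_ | n) <;> simp [PowerSeries.coeff_one]
  | succ d =>
    rw [PowerSeries.invOneSubPow_val_succ_eq_mk_add_choose]
    ext n
    rw [PowerSeries.coeff_mk, PowerSeries.coeff_mk, Nat.multichoose_eq, Nat.add_right_comm,
      Nat.add_sub_cancel, Nat.choose_symm_add]

theorem sum_neg_one_pow_mul_choose_mul_eq_card {ι : Type*} [Fintype ι] (k : ι → ℕ) (d : ℕ)
    {f : ℕ → ℕ}
    (hf : ∀ t, f t = ∑ p, if k p ≤ t then d.multichoose (t - k p) else 0) (i : ℕ) :
    ∑ j ∈ Finset.range (i + 1), (-1 : ℤ) ^ j * d.choose j * f (i - j) =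
      Nat.card {p // k p = i} := by
  classical
  have hmk : PowerSeries.mk (fun t => (f t : ℤ)) =
      (∑ p, PowerSeries.X ^ k p) * (PowerSeries.invOneSubPow ℤ d).val := by
    ext t
    rw [invOneSubPow_val_eq_mk_multichoose, Finset.sum_mul, map_sum, PowerSeries.coeff_mk, hf]
    push_cast [PowerSeries.coeff_X_pow_mul', PowerSeries.coeff_mk]
    rfl
  have hmul : (1 - PowerSeries.X) ^ d * PowerSeries.mk (fun t => (f t : ℤ)) =
      ∑ p, PowerSeries.X ^ k p := by
    rw [hmk, mul_left_comm, ← PowerSeries.invOneSubPow_inv_eq_one_sub_pow, Units.inv_eq_val_inv,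
      Units.inv_mul, mul_one]
  have hcoeff := congrArg (PowerSeries.coeff i) hmul
  rw [PowerSeries.coeff_mul, Finset.Nat.sum_antidiagonal_eq_sum_range_succ_mk] at hcoeff
  simp only [coeff_one_sub_X_pow, PowerSeries.coeff_mk] at hcoeff
  rw [hcoeff, map_sum, Nat.card_eq_fintype_card, Fintype.card_subtype, Finset.card_filter]
  push_cast [PowerSeries.coeff_X_pow, eq_comm]
  rfl

end PowerSeriesCoefficients

section ConvexHull

variable {E V : Type*} [AddCommGroup V] [Module ℝ V] {v : E → V} {ht : V →ₗ[ℝ] ℝ}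

theorem convexHull_range_eq_image_stdSimplex [Fintype E] (v : E → V) :
    convexHull ℝ (Set.range v) = Fintype.linearCombination ℝ v '' stdSimplex ℝ E := by
  classical
  rw [← convexHull_rangle_single_eq_stdSimplex, LinearMap.image_convexHull, ← Set.range_comp]
  congr! 2
  funext e
  simp

theorem mem_smul_convexHull_range_iff [Finite E] (hht : ∀ e, ht (v e) = 1) {t : ℝ} (ht0 : 0 < t)
    {x : V} : x ∈ t • convexHull ℝ (Set.range v) ↔
      x ∈ PointedCone.hull ℝ (Set.range v) ∧ ht x = t := by
  have := Fintype.ofFinite E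
  rw [convexHull_range_eq_image_stdSimplex, mem_hull_range_iff]
  constructor
  · rintro ⟨_, ⟨q, hq, rfl⟩, rfl⟩
    refine ⟨⟨t • q, smul_nonneg ht0.le hq.1, map_smul _ t q⟩, ?_⟩
    change ht (t • _) = t
    rw [map_smul, map_linearCombination_eq_sum hht, hq.2, smul_eq_mul, mul_one]
  · rintro ⟨⟨q, hq, rfl⟩, hsum⟩
    rw [map_linearCombination_eq_sum hht] at hsum
    refine ⟨_, ⟨t⁻¹ • q, ⟨smul_nonneg (inv_nonneg.2 ht0.le) hq, ?_⟩, rfl⟩, ?_⟩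
    · simp only [Pi.smul_apply, smul_eq_mul, ← Finset.mul_sum, hsum, inv_mul_cancel₀ ht0.ne']
    · change t • _ = _
      rw [map_smul, smul_inv_smul₀ ht0.ne']

theorem conePoints_zero [Finite E] (hht : ∀ e, ht (v e) = 1) (Λ : AddSubgroup V) :
    conePoints v Λ ht 0 = {0} := by
  have := Fintype.ofFinite E
  refine Set.Subset.antisymm ?_ (Set.singleton_subset_iff.2 ⟨zero_mem _, zero_mem _, by simp⟩)
  rintro x ⟨hx, -, hx0⟩
  obtain ⟨q, hq, rfl⟩ := mem_hull_range_iff.1 hx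
  rw [map_linearCombination_eq_sum hht, Nat.cast_zero, Fintype.sum_eq_zero_iff_of_nonneg hq] at hx0
  rw [hx0, map_zero, Set.mem_singleton_iff]

theorem direction_affineSpan_convexHull_range [Finite E] [Nonempty E] (hht : ∀ e, ht (v e) = 1)
    (hspan : Submodule.span ℝ (Set.range v) = ⊤) :
    (affineSpan ℝ (convexHull ℝ (Set.range v))).direction = LinearMap.ker ht := by
  have := Fintype.ofFinite E
  let e₀ := Classical.arbitrary E
  rw [affineSpan_convexHull, direction_affineSpan]
  apply le_antisymm
  · rw [vectorSpan_def, Submodule.span_le]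
    rintro _ ⟨_, ⟨e, rfl⟩, _, ⟨f, rfl⟩, rfl⟩
    simp [hht]
  · intro x hx
    obtain ⟨q, rfl⟩ := (Submodule.mem_span_range_iff_exists_fun ℝ).1
      (hspan ▸ Submodule.mem_top : x ∈ Submodule.span ℝ (Set.range v))
    have hq : ∑ e, q e = 0 := by simpa [hht] using hx
    have hsub : ∑ e, q e • v e = ∑ e, q e • (v e - v e₀) := by
      simp only [smul_sub, Finset.sum_sub_distrib, ← Finset.sum_smul, hq, zero_smul, sub_zero]
    rw [hsub]
    exact sum_mem fun e _ => Submodule.smul_mem _ _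
      (vsub_mem_vectorSpan ℝ (Set.mem_range_self e) (Set.mem_range_self e₀))

end ConvexHull

section LatticePolytope

/-- The lattice `ℤ ^ N` in `ℝ ^ N`, encoded as a span so that its discreteness is available. -/
noncomputable def integerLattice (N : ℕ) : AddSubgroup (Fin N → ℝ) :=
  (Submodule.span ℤ (Set.range (Pi.basisFun ℝ (Fin N)))).toAddSubgroup

instance (N : ℕ) : DiscreteTopology (integerLattice N) :=
  inferInstanceAs (DiscreteTopology (Submodule.span ℤ (Set.range (Pi.basisFun ℝ (Fin N)))))

theorem mem_integerLattice_iff {N : ℕ} {x : Fin N → ℝ} :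
    x ∈ integerLattice N ↔ ∃ z : Fin N → ℤ, (fun i => (z i : ℝ)) = x := by
  rw [integerLattice, Submodule.mem_toAddSubgroup, Module.Basis.mem_span_iff_repr_mem]
  simp only [Pi.basisFun_repr, Set.mem_range, Classical.skolem, funext_iff]
  rfl

variable {E : Type*} {N : ℕ} {v : E → Fin N → ℝ} {ht : (Fin N → ℝ) →ₗ[ℝ] ℝ}
  {w : E → ℝ} {u : Fin N → ℝ}

theorem ehr_eq_card_conePoints [Finite E] (hht : ∀ e, ht (v e) = 1) (t : ℕ) :
    ehr (convexHull ℝ (Set.range v)) t = Nat.card (conePoints v (integerLattice N) ht t) := by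
  rw [ehr]
  split_ifs with h0
  · rw [h0, conePoints_zero hht, Nat.card_unique]
  · let cast (z : Fin N → ℤ) : Fin N → ℝ := fun i => (z i : ℝ)
    have hcast : Function.Injective cast := fun z z' h =>
      funext fun i => Int.cast_injective (congrFun h i)
    have himage : conePoints v (integerLattice N) ht t =
        cast '' {z | cast z ∈ (t : ℝ) • convexHull ℝ (Set.range v)} := by
      ext x
      have ht0 : (0 : ℝ) < t := Nat.cast_pos.2 (Nat.pos_of_ne_zero h0)
      simp only [conePoints, Set.mem_ofPred_eq, mem_integerLattice_iff,
        mem_smul_convexHull_range_iff hht ht0, Set.mem_image]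
      constructor
      · rintro ⟨hx, ⟨z, rfl⟩, hxt⟩
        exact ⟨z, ⟨hx, hxt⟩, rfl⟩
      · rintro ⟨z, ⟨hx, hxt⟩, rfl⟩
        exact ⟨hx, ⟨z, rfl⟩, hxt⟩
    rw [himage, Nat.card_image_of_injective hcast]
    rfl

theorem polyDim_add_one [Finite E] [Nonempty E] (hht : ∀ e, ht (v e) = 1)
    (hspan : Submodule.span ℝ (Set.range v) = ⊤) :
    polyDim (convexHull ℝ (Set.range v)) + 1 = N := by
  have hrange : LinearMap.range ht = ⊤ := LinearMap.range_eq_top.2 fun r =>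
    ⟨r • v (Classical.arbitrary E), by rw [map_smul, hht, smul_eq_mul, mul_one]⟩
  have hrank := LinearMap.finrank_range_add_finrank_ker ht
  rw [hrange, finrank_top, Module.finrank_self, Module.finrank_fin_fun] at hrank
  rw [polyDim, direction_affineSpan_convexHull_range hht hspan, add_comm, hrank]

variable [Fintype E]

-- Stanley: a box point of height `k` contributes `λ ^ k / (1 - λ) ^ N` to the Ehrhart series.
theorem deltaCoeff_eq_card_boxPoint [Nonempty E] (hv : ∀ e, v e ∈ integerLattice N)
    (hht : ∀ e, ht (v e) = 1) (hspan : Submodule.span ℝ (Set.range v) = ⊤) (hw : ∀ e, 0 < w e)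
    (hgen : IsGenericWeight v w) (hu : IsGenericVector v u)
    (hucone : u ∈ PointedCone.hull ℝ (Set.range v)) (i : ℕ) :
    deltaCoeff (convexHull ℝ (Set.range v)) i =
      Nat.card {p : BoxPoint v (integerLattice N) ht w u // p.height = i} := by
  have := Fintype.ofFinite (BoxPoint v (integerLattice N) ht w u)
  rw [deltaCoeff, polyDim_add_one hht hspan]
  refine sum_neg_one_pow_mul_choose_mul_eq_card _ N (fun t => ?_) i
  rw [ehr_eq_card_conePoints hht, card_conePoints hv hht hspan hw hgen hu hucone,
    Module.finrank_fin_fun]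

theorem BoxPoint.height_le_polyDeg [Nonempty E] (hv : ∀ e, v e ∈ integerLattice N)
    (hht : ∀ e, ht (v e) = 1) (hspan : Submodule.span ℝ (Set.range v) = ⊤) (hw : ∀ e, 0 < w e)
    (hgen : IsGenericWeight v w) (hu : IsGenericVector v u)
    (hucone : u ∈ PointedCone.hull ℝ (Set.range v)) (p : BoxPoint v (integerLattice N) ht w u) :
    p.height ≤ polyDeg (convexHull ℝ (Set.range v)) := by
  have hset : {i | deltaCoeff (convexHull ℝ (Set.range v)) i ≠ 0} =
      Set.range (BoxPoint.height : BoxPoint v (integerLattice N) ht w u → ℕ) := by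
    ext i
    rw [Set.mem_ofPred_eq, deltaCoeff_eq_card_boxPoint hv hht hspan hw hgen hu hucone,
      Nat.cast_ne_zero, ← Nat.pos_iff_ne_zero, Finite.card_pos_iff, nonempty_subtype]
    rfl
  rw [polyDeg, hset]
  exact le_csSup (Set.finite_range _).bddAbove (Set.mem_range_self p)

end LatticePolytope

/-! ### Interior lattice points -/

section Interior

variable {ι V : Type*} [Fintype ι] [NormedAddCommGroup V] [NormedSpace ℝ V]
  [FiniteDimensional ℝ V] {v : ι → V}

theorem linearCombination_mem_interior_hull (hspan : Submodule.span ℝ (Set.range v) = ⊤)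
    {c : ι → ℝ} (hc : ∀ i, 0 < c i) :
    Fintype.linearCombination ℝ v c ∈
      interior (PointedCone.hull ℝ (Set.range v) : Set V) := by
  have hopen : IsOpenMap (Fintype.linearCombination ℝ v) :=
    LinearMap.isOpenMap_of_finiteDimensional _ <| by
      rw [← LinearMap.range_eq_top, Fintype.range_linearCombination, hspan]
  have hpos : IsOpen {q : ι → ℝ | ∀ i, 0 < q i} := by
    simp only [Set.ofPred_forall]
    exact isOpen_iInter_of_finite fun i => isOpen_lt continuous_const (continuous_apply i)
  refine interior_maximal ?_ (hopen _ hpos) ⟨c, hc, rfl⟩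
  rintro _ ⟨q, hq, rfl⟩
  exact mem_hull_range_iff.2 ⟨q, fun i => (hq i).le, rfl⟩

end Interior

section Reciprocity

open Topology

theorem SubBasis.LexPos.intPart_neg_le {E V : Type*} [AddCommGroup V] [Module ℝ V] {v : E → V}
    {B : SubBasis v} {y u : V} (h : B.LexPos y (-u)) {e : E} (he : e ∈ B.carrier) :
    B.intPart u (-y) e ≤ -1 := by
  have hpos := h e he
  rw [map_neg, Pi.neg_apply, neg_pos] at hpos
  rw [intPart, map_neg, Pi.neg_apply]
  split_ifs with hu
  · have hfloor : 0 ≤ ⌊B.coord y e⌋ := Int.floor_nonneg.2 (hpos.elim le_of_lt fun h => h.1.ge)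
    rw [Int.ceil_neg]
    linarith
  · have hceil : 0 < ⌈B.coord y e⌉ := Int.ceil_pos.2 (hpos.resolve_right fun h => hu h.2)
    rw [Int.floor_neg]
    linarith

-- Ehrhart–Macdonald reciprocity: reflecting the half-open cone that contains `y` and translating
-- it by its generators turns `-y` into a box point.
theorem exists_boxPoint_of_mem_interior {E V : Type*} [Fintype E] [NormedAddCommGroup V]
    [NormedSpace ℝ V] {v : E → V} {Λ : AddSubgroup V} {ht : V →ₗ[ℝ] ℝ} {w : E → ℝ} {u : V}
    (hv : ∀ e, v e ∈ Λ) (hht : ∀ e, ht (v e) = 1) (hspan : Submodule.span ℝ (Set.range v) = ⊤)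
    (hw : ∀ e, 0 < w e) (hgen : IsGenericWeight v w) (hu : IsGenericVector v u) {y : V}
    (hyΛ : y ∈ Λ) (hy : y ∈ interior (PointedCone.hull ℝ (Set.range v) : Set V)) {s : ℕ}
    (hys : ht y = s) :
    ∃ p : BoxPoint v Λ ht w u, Module.finrank ℝ V ≤ s + p.height := by
  have hmem : ∀ᶠ ε in 𝓝[>] (0 : ℝ), y + ε • -u ∈ PointedCone.hull ℝ (Set.range v) := by
    have hc : Filter.Tendsto (fun ε : ℝ => y + ε • -u) (𝓝[>] 0) (𝓝 (y + (0 : ℝ) • -u)) :=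
      (Continuous.tendsto (by fun_prop) 0).mono_left nhdsWithin_le_nhds
    rw [zero_smul, add_zero] at hc
    exact hc.eventually (mem_interior_iff_mem_nhds.1 hy)
  obtain ⟨B, hB, hpos⟩ := exists_isCell_lexPos hspan hw hgen
    (fun B e he => by simpa using hu B e he) hmem
  obtain ⟨p, -, -, hp⟩ := BoxPoint.exists_point_eq_sub hv hht hB u (neg_mem hyΛ) (k := -s)
    (by rw [map_neg, hys, Int.cast_neg, Int.cast_natCast])
  have hsum : ∑ e, B.intPart u (-y) e ≤ -B.carrier.card :=
    calc ∑ e, B.intPart u (-y) e = ∑ e ∈ B.carrier, B.intPart u (-y) e :=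
          (Finset.sum_subset (Finset.subset_univ _) fun e _ he => B.intPart_of_notMem u _ he).symm
      _ ≤ ∑ _e ∈ B.carrier, (-1 : ℤ) := Finset.sum_le_sum fun e he => hpos.intPart_neg_le he
      _ = -B.carrier.card := by simp
  refine ⟨p, ?_⟩
  rw [B.card_carrier] at hsum
  omega

theorem le_add_polyDeg_of_mem_interior {E : Type*} [Finite E] [Nonempty E] {N : ℕ}
    {v : E → Fin N → ℝ} {ht : (Fin N → ℝ) →ₗ[ℝ] ℝ} (hv : ∀ e, v e ∈ integerLattice N)
    (hht : ∀ e, ht (v e) = 1) (hspan : Submodule.span ℝ (Set.range v) = ⊤) {y : Fin N → ℝ}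
    (hyΛ : y ∈ integerLattice N)
    (hy : y ∈ interior (PointedCone.hull ℝ (Set.range v) : Set (Fin N → ℝ))) {s : ℕ}
    (hys : ht y = s) : N ≤ s + polyDeg (convexHull ℝ (Set.range v)) := by
  have := Fintype.ofFinite E
  obtain ⟨w, hw, hgen⟩ := exists_isGenericWeight v
  obtain ⟨u, hucone, hu⟩ := exists_isGenericVector v
  obtain ⟨p, hp⟩ := exists_boxPoint_of_mem_interior hv hht hspan hw hgen hu hyΛ hy hys
  rw [Module.finrank_fin_fun] at hp
  exact hp.trans (Nat.add_le_add_left (p.height_le_polyDeg hv hht hspan hw hgen hu hucone) s)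

end Reciprocity

/-! ### Disjoint odd cycles force large degree -/

section OddWalks

variable {N : ℕ} {G : SimpleGraph (Fin N)} {S : Submodule ℝ (Fin N → ℝ)}

theorem single_sub_neg_one_pow_smul_single_mem {a b : Fin N} (p : G.Walk a b)
    (hS : ∀ e ∈ p.edges, rho e ∈ S) :
    Pi.single b 1 - (-1 : ℝ) ^ p.length • Pi.single a 1 ∈ S := by
  induction p with
  | nil => simp
  | @cons a c b h p ih =>
    rw [SimpleGraph.Walk.edges_cons, List.forall_mem_cons] at hS
    have hsum := add_mem (ih hS.2) (Submodule.smul_mem S ((-1) ^ p.length) hS.1)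
    rw [rho_mk h.ne] at hsum
    convert! hsum using 1
    rw [SimpleGraph.Walk.length_cons, pow_succ]
    module

theorem single_mem_of_odd_length {a : Fin N} (p : G.Walk a a) (hp : Odd p.length)
    (hS : ∀ e ∈ p.edges, rho e ∈ S) {x : Fin N} (hx : x ∈ p.support) : Pi.single x 1 ∈ S := by
  have ha : Pi.single a 1 ∈ S := by
    have h2 := single_sub_neg_one_pow_smul_single_mem p hS
    rw [hp.neg_one_pow, neg_one_smul, sub_neg_eq_add, ← two_smul ℝ] at h2
    exact (S.smul_mem_iff two_ne_zero).1 h2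
  have htake := single_sub_neg_one_pow_smul_single_mem (p.takeUntil x hx) fun e he =>
    hS e (p.edges_takeUntil_subset_edges hx he)
  exact (S.sub_mem_iff_left (S.smul_mem _ ha)).1 htake

end OddWalks

section EvenEdgeList

variable {N : ℕ} {G : SimpleGraph (Fin N)}

/-- A list of edges of `G`, repetitions allowed, which covers every vertex an even number of times,
is short compared with the vertex set `U`, and whose edges span all coordinates in `U`. Half the sum
of its edge vectors is a lattice point of small height in the cone over the edge polytope. -/
structure IsEvenEdgeList (G : SimpleGraph (Fin N)) (U : Set (Fin N)) (l : List (Sym2 (Fin N))) :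
    Prop where
  mem_edgeSet : ∀ e ∈ l, e ∈ G.edgeSet
  even_countP : ∀ i, Even (l.countP (i ∈ ·))
  even_length : Even l.length
  length_add_six_le : l.length + 6 ≤ 2 * U.ncard
  single_mem_span : ∀ i ∈ U, Pi.single i 1 ∈ Submodule.span ℝ (rho '' {e | e ∈ l})

theorem isEvenEdgeList_append_edges {v w : Fin N} {c₁ : G.Walk v v} {c₂ : G.Walk w w}
    (h₁ : c₁.IsCycle) (h₂ : c₂.IsCycle) (ho₁ : Odd c₁.length) (ho₂ : Odd c₂.length)
    (hdisj : ∀ x, x ∈ c₁.support → x ∉ c₂.support) :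
    IsEvenEdgeList G ({x | x ∈ c₁.support} ∪ {x | x ∈ c₂.support}) (c₁.edges ++ c₂.edges) where
  mem_edgeSet e he := (List.mem_append.1 he).elim (fun h => c₁.edges_subset_edgeSet h)
    fun h => c₂.edges_subset_edgeSet h
  even_countP i := by
    rw [List.countP_append]
    exact ((h₁.isTrail.even_countP_edges_iff i).2 fun h => absurd rfl h).add
      ((h₂.isTrail.even_countP_edges_iff i).2 fun h => absurd rfl h)
  even_length := by
    rw [List.length_append, SimpleGraph.Walk.length_edges, SimpleGraph.Walk.length_edges]
    exact ho₁.add_odd ho₂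
  length_add_six_le := by
    have hd : Disjoint {x | x ∈ c₁.support} {x | x ∈ c₂.support} := Set.disjoint_left.2 hdisj
    rw [Set.ncard_union_eq hd, ncard_support_of_isCycle h₁,
      ncard_support_of_isCycle h₂, List.length_append, SimpleGraph.Walk.length_edges,
      SimpleGraph.Walk.length_edges]
    have := h₁.three_le_length
    have := h₂.three_le_length
    omega
  single_mem_span i hi := hi.elim
    (single_mem_of_odd_length c₁ ho₁ fun _ he =>
      Submodule.subset_span (Set.mem_image_of_mem rho (List.mem_append_left _ he)))
    (single_mem_of_odd_length c₂ ho₂ fun _ he =>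
      Submodule.subset_span (Set.mem_image_of_mem rho (List.mem_append_right _ he)))

namespace IsEvenEdgeList

variable {U : Set (Fin N)} {l : List (Sym2 (Fin N))}

theorem insert (h : IsEvenEdgeList G U l) {a b : Fin N} (hab : G.Adj a b) (ha : a ∈ U)
    (hb : b ∉ U) : IsEvenEdgeList G (insert b U) (s(a, b) :: s(a, b) :: l) where
  mem_edgeSet e he := by
    simp only [List.mem_cons, or_self_left] at he
    exact he.elim (fun h => h ▸ hab) (h.mem_edgeSet e)
  even_countP i := by
    rw [List.countP_cons, List.countP_cons, add_assoc]
    exact (h.even_countP i).add ⟨_, rfl⟩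
  even_length := h.even_length.add even_two
  length_add_six_le := by
    rw [Set.ncard_insert_of_notMem hb, List.length_cons, List.length_cons]
    have := h.length_add_six_le
    omega
  single_mem_span := by
    have hU : ∀ i ∈ U, Pi.single i 1 ∈
        Submodule.span ℝ (rho '' {e | e ∈ s(a, b) :: s(a, b) :: l}) := fun i hi =>
      Submodule.span_mono (Set.image_mono fun e he => List.mem_cons_of_mem _
        (List.mem_cons_of_mem _ he)) (h.single_mem_span i hi)
    refine Set.forall_mem_insert.2 ⟨(Submodule.add_mem_iff_right _ (hU a ha)).1 ?_, hU⟩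
    rw [← rho_mk hab.ne]
    exact Submodule.subset_span ⟨_, List.mem_cons_self, rfl⟩

theorem exists_univ (hG : G.Connected) (h : IsEvenEdgeList G U l) :
    ∃ l', IsEvenEdgeList G Set.univ l' := by
  obtain ⟨M, -, hM⟩ := (Set.toFinite {U | ∃ l, IsEvenEdgeList G U l}).exists_le_maximal ⟨l, h⟩
  obtain ⟨l', hl'⟩ := hM.prop
  obtain ⟨x, hx⟩ : M.Nonempty :=
    Set.nonempty_of_ncard_ne_zero (by have := hl'.length_add_six_le; omega)
  suffices hMuniv : M = Set.univ from ⟨l', hMuniv ▸ hl'⟩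
  by_contra hne
  obtain ⟨y, hy⟩ := (Set.ne_univ_iff_exists_notMem M).1 hne
  obtain ⟨p⟩ := hG.preconnected x y
  obtain ⟨d, -, hd₁, hd₂⟩ := p.exists_boundary_dart M hx hy
  exact hd₂ (hM.le_of_ge ⟨_, hl'.insert d.adj hd₁ hd₂⟩ (Set.subset_insert _ _)
    (Set.mem_insert _ _))

theorem span_eq_top (h : IsEvenEdgeList G Set.univ l) :
    Submodule.span ℝ (rho '' {e | e ∈ l}) = ⊤ := by
  rw [← top_le_iff, ← (Pi.basisFun ℝ (Fin N)).span_eq, Submodule.span_le]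
  rintro _ ⟨i, rfl⟩
  rw [Pi.basisFun_apply]
  exact h.single_mem_span i (Set.mem_univ i)

end IsEvenEdgeList

end EvenEdgeList

section HalfSum

variable {N : ℕ} {G : SimpleGraph (Fin N)} {l : List (Sym2 (Fin N))}

/-- Half the sum of the edge vectors in a list of edges. -/
noncomputable def halfSum (l : List (Sym2 (Fin N))) : Fin N → ℝ :=
  (2⁻¹ : ℝ) • (l.map rho).sum

theorem halfSum_apply (l : List (Sym2 (Fin N))) (i : Fin N) :
    halfSum l i = (l.countP (i ∈ ·) : ℝ) / 2 := by
  suffices h : (l.map rho).sum i = l.countP (i ∈ ·) by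
    rw [halfSum, Pi.smul_apply, h, smul_eq_mul, inv_mul_eq_div]
  induction l with
  | nil => simp
  | cons e l ih =>
    rw [List.map_cons, List.sum_cons, Pi.add_apply, ih, List.countP_cons, add_comm]
    simp [rho]

theorem sum_halfSum (hl : ∀ e ∈ l, e ∈ G.edgeSet) : ∑ i, halfSum l i = l.length := by
  have hl2 : l.map (fun e => ∑ i, rho e i) = l.map fun _ => 2 :=
    List.map_congr_left fun e he => sum_rho (G.not_isDiag_of_mem_edgeSet (hl e he))
  have hsum : ∑ i, (l.map rho).sum i = (l.map fun e => ∑ i, rho e i).sum := by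
    clear hl hl2
    induction l with
    | nil => simp
    | cons e l ih => simp [Finset.sum_add_distrib, ih]
  simp only [halfSum, Pi.smul_apply, smul_eq_mul, ← Finset.mul_sum, hsum, hl2, List.map_const',
    List.sum_replicate, nsmul_eq_mul]
  ring

theorem halfSum_mem_integerLattice (h : ∀ i, Even (l.countP (i ∈ ·))) :
    halfSum l ∈ integerLattice N := by
  choose m hm using h
  refine mem_integerLattice_iff.2 ⟨fun i => m i, funext fun i => ?_⟩
  rw [halfSum_apply, hm]
  push_cast
  ring

theorem halfSum_mem_interior_hull (hspan : Submodule.span ℝ (rho '' {e | e ∈ l}) = ⊤) :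
    halfSum l ∈ interior (PointedCone.hull ℝ (rho '' {e | e ∈ l}) : Set (Fin N → ℝ)) := by
  have hrange : Set.range (rho ∘ l.get) = rho '' {e | e ∈ l} := by
    rw [Set.range_comp, Set.range_list_get]
  have hsum : Fintype.linearCombination ℝ (rho ∘ l.get) (fun _ => 2⁻¹) = halfSum l := by
    rw [Fintype.linearCombination_apply, ← Finset.smul_sum, halfSum, ← Fin.sum_univ_fun_getElem]
    rfl
  rw [← hrange] at hspan ⊢
  rw [← hsum]
  exact linearCombination_mem_interior_hull hspan fun _ => by positivity

end HalfSum

section EdgePolytope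

variable {N : ℕ} {G : SimpleGraph (Fin N)}

theorem rho_mem_integerLattice (e : Sym2 (Fin N)) : rho e ∈ integerLattice N :=
  mem_integerLattice_iff.2 ⟨fun i => if i ∈ e then 1 else 0, funext fun i => by simp [rho]⟩

theorem le_add_polyDeg_edgePolytope (hE : G.edgeSet.Nonempty)
    (hspan : Submodule.span ℝ (rho '' G.edgeSet) = ⊤) {y : Fin N → ℝ} (hyΛ : y ∈ integerLattice N)
    (hy : y ∈ interior (PointedCone.hull ℝ (rho '' G.edgeSet) : Set (Fin N → ℝ))) {s : ℕ}
    (hys : ∑ i, y i = 2 * s) : N ≤ s + polyDeg (edgePolytope G) := by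
  have := hE.to_subtype
  obtain ⟨ht, hht⟩ : ∃ ht : (Fin N → ℝ) →ₗ[ℝ] ℝ, ∀ x, ht x = 2⁻¹ * ∑ i, x i :=
    ⟨(2⁻¹ : ℝ) • ∑ i, LinearMap.proj i, fun x => by simp⟩
  rw [Set.image_eq_range] at hspan hy
  rw [edgePolytope, Set.image_eq_range]
  refine le_add_polyDeg_of_mem_interior (ht := ht) (fun e => rho_mem_integerLattice _)
    (fun e => ?_) hspan hyΛ hy ?_
  · rw [hht, sum_rho (G.not_isDiag_of_mem_edgeSet e.2), inv_mul_cancel₀ two_ne_zero]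
  · rw [hht, hys, inv_mul_cancel_left₀ two_ne_zero]

theorem two_lt_polyDeg_of_disjoint_odd_cycles (hG : G.Connected) {v w : Fin N} {c₁ : G.Walk v v}
    {c₂ : G.Walk w w} (h₁ : c₁.IsCycle) (h₂ : c₂.IsCycle) (ho₁ : Odd c₁.length)
    (ho₂ : Odd c₂.length) (hdisj : ∀ x, x ∈ c₁.support → x ∉ c₂.support) :
    2 < polyDeg (edgePolytope G) := by
  obtain ⟨l, hl⟩ := (isEvenEdgeList_append_edges h₁ h₂ ho₁ ho₂ hdisj).exists_univ hG
  obtain ⟨s, hs⟩ := hl.even_length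
  have hsub : rho '' {e | e ∈ l} ⊆ rho '' G.edgeSet := Set.image_mono hl.mem_edgeSet
  have hE : G.edgeSet.Nonempty :=
    ⟨s(v, c₁.snd), c₁.adj_snd h₁.not_nil⟩
  have hspan : Submodule.span ℝ (rho '' G.edgeSet) = ⊤ :=
    top_le_iff.1 (hl.span_eq_top ▸ Submodule.span_mono hsub)
  have hinterior := interior_mono (Submodule.span_mono hsub)
    (halfSum_mem_interior_hull hl.span_eq_top)
  have hN := le_add_polyDeg_edgePolytope hE hspan (halfSum_mem_integerLattice hl.even_countP)
    hinterior (s := s) (by rw [sum_halfSum hl.mem_edgeSet, hs, Nat.cast_add, two_mul])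
  have hlength := hl.length_add_six_le
  rw [Set.ncard_univ, Nat.card_eq_fintype_card, Fintype.card_fin] at hlength
  omega

end EdgePolytope

/-- If `deg(P_G) ≤ 2` for a finite connected simple graph `G`, then
any two odd cycles of `G` have a common vertex; in particular `G` satisfies the odd
cycle condition and the edge ring `K[G]` is Cohen–Macaulay, equivalently (by the
theorem of Ohsugi–Hibi) normal, i.e. integrally closed. -/
theorem odd_cycles_intersect_of_polyDeg_le_two
    {N : ℕ} (K : Type*) [Field K] (G : SimpleGraph (Fin N)) (hG : G.Connected)
    (hdeg : polyDeg (edgePolytope G) ≤ 2) :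
    (∀ (v w : Fin N) (c₁ : G.Walk v v) (c₂ : G.Walk w w),
      c₁.IsCycle → c₂.IsCycle → Odd c₁.length → Odd c₂.length →
        ∃ x, x ∈ c₁.support ∧ x ∈ c₂.support) ∧
    (∀ (v w : Fin N) (c₁ : G.Walk v v) (c₂ : G.Walk w w),
      c₁.IsCycle → c₂.IsCycle → Odd c₁.length → Odd c₂.length →
        (∀ x, x ∈ c₁.support → x ∉ c₂.support) →
          ∃ a b, a ∈ c₁.support ∧ b ∈ c₂.support ∧ G.Adj a b) ∧
    IsIntegrallyClosed (edgeRing K G) := by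
  have hodd : OddCyclesIntersect G := by
    intro v w c₁ c₂ h₁ h₂ ho₁ ho₂
    by_contra! hdisj
    exact hdeg.not_gt (two_lt_polyDeg_of_disjoint_odd_cycles hG h₁ h₂ ho₁ ho₂ hdisj)
  refine ⟨hodd, fun v w c₁ c₂ h₁ h₂ ho₁ ho₂ hdisj => ?_, isIntegrallyClosed_edgeRing K hodd⟩
  obtain ⟨x, hx₁, hx₂⟩ := hodd v w c₁ c₂ h₁ h₂ ho₁ ho₂
  exact absurd hx₂ (hdisj x hx₁)
end

section
/- Let G be a finite simple graph with no cycle of length 4, and let C_1, C_2, C_3 be three distinct 3-cycles of G such that V(C_i) ∩ V(C_j) ≠ ∅ for all 1 ≤ i < j ≤ 3. Then E(C_i) ∩ E(C_j) = ∅ for i ≠ j and there is a single vertex common to all three cycles, i.e., V(C_1) ∩ V(C_2) ∩ V(C_3) ≠ ∅; in other words C_1 ∪ C_2 ∪ C_3 is the friendship graph consisting of three triangles glued at one common vertex. -/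
/-!
In a graph without `4`-cycles any two distinct vertices have at most one common neighbour. Hence a
triangle contains every common neighbour of each two of its vertices, and is determined by any two
of them, so distinct triangles share no edge. Let `p`, `q`, `r` be meeting points of the first and
second, first and third, second and third triangle. If two of them coincide, that point is on all
three triangles. Otherwise they are pairwise adjacent, so `r` is a common neighbour of the vertices
`p` and `q` of the first triangle and therefore lies on it. Triangles enter the argument only as
cliques with more than two vertices.
-/

/-- A graph is four-cycle-free if no closed walk in it is a cycle of length `4`. The cycle need not
be induced. -/
def FourCycleFree {V : Type*} (G : SimpleGraph V) : Prop :=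
  ¬ ∃ (v : V) (w : G.Walk v v), w.IsCycle ∧ w.length = 4

section

variable {V : Type*} {G : SimpleGraph V} {s t u : Set V} {x y : V}

theorem exists_mem_commonNeighbors_of_isClique (hs : G.IsClique s) (hs_card : 2 < s.encard)
    (hx : x ∈ s) (hy : y ∈ s) : ∃ z ∈ s, z ∈ G.commonNeighbors x y := by
  obtain ⟨z, hz, hzxy⟩ : (s \ {x, y}).Nonempty :=
    Set.sdiff_nonempty.2 fun hsub ↦ hs_card.not_ge <| calc
      s.encard ≤ ({x, y} : Set V).encard := Set.encard_le_encard hsub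
      _ ≤ ({y} : Set V).encard + 1 := Set.encard_insert_le {y} x
      _ = 2 := by rw [Set.encard_singleton, one_add_one_eq_two]
  obtain ⟨hzx, hzy⟩ : z ≠ x ∧ z ≠ y := by simpa using hzxy
  exact ⟨z, hz, hs hx hz hzx.symm, hs hy hz hzy.symm⟩

theorem disjoint_edgeSet_inter_sym2 (hst : (s ∩ t).Subsingleton) :
    Disjoint (G.edgeSet ∩ s.sym2) (G.edgeSet ∩ t.sym2) := by
  rw [Set.disjoint_left]
  rintro ⟨x, y⟩ ⟨hxy, hxs, hys⟩ ⟨-, hxt, hyt⟩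
  exact G.ne_of_adj hxy (hst ⟨hxs, hxt⟩ ⟨hys, hyt⟩)

namespace FourCycleFree

theorem commonNeighbors_subsingleton (hG : FourCycleFree G) (hxy : x ≠ y) :
    (G.commonNeighbors x y).Subsingleton := by
  intro z hz w hw
  rw [SimpleGraph.mem_commonNeighbors] at hz hw
  obtain ⟨hxz, hyz⟩ := hz
  obtain ⟨hxw, hyw⟩ := hw
  by_contra hzw
  refine hG ⟨x, .cons hxz (.cons hyz.symm (.cons hyw (.cons hxw.symm .nil))), ?_, rfl⟩
  simp [SimpleGraph.Walk.cons_isCycle_iff, SimpleGraph.Walk.cons_isPath_iff, hxy, hxy.symm, hzw,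
    hxz.ne, hxz.ne', hyz.ne', hxw.ne', hyw.ne]

theorem commonNeighbors_subset_of_isClique (hG : FourCycleFree G) (hs : G.IsClique s)
    (hs_card : 2 < s.encard) (hx : x ∈ s) (hy : y ∈ s) (hxy : x ≠ y) :
    G.commonNeighbors x y ⊆ s := by
  intro w hw
  obtain ⟨z, hzs, hz⟩ := exists_mem_commonNeighbors_of_isClique hs hs_card hx hy
  exact hG.commonNeighbors_subsingleton hxy hz hw ▸ hzs

theorem subset_of_isClique (hG : FourCycleFree G) (hs : G.IsClique s) (ht : G.IsClique t)
    (ht_card : 2 < t.encard) (hst : (s ∩ t).Nontrivial) : s ⊆ t := by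
  obtain ⟨x, ⟨hxs, hxt⟩, y, ⟨hys, hyt⟩, hxy⟩ := hst
  intro z hz
  by_cases hxz : x = z
  · exact hxz ▸ hxt
  by_cases hyz : y = z
  · exact hyz ▸ hyt
  exact hG.commonNeighbors_subset_of_isClique ht ht_card hxt hyt hxy ⟨hs hxs hz hxz, hs hys hz hyz⟩

theorem inter_subsingleton_of_isClique (hG : FourCycleFree G) (hs : G.IsClique s)
    (ht : G.IsClique t) (hs_card : 2 < s.encard) (ht_card : 2 < t.encard) (hne : s ≠ t) :
    (s ∩ t).Subsingleton := by
  by_contra hst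
  rw [Set.not_subsingleton_iff] at hst
  exact hne ((hG.subset_of_isClique hs ht ht_card hst).antisymm
    (hG.subset_of_isClique ht hs hs_card (Set.inter_comm s t ▸ hst)))

theorem inter_inter_nonempty_of_isClique (hG : FourCycleFree G) (hs : G.IsClique s)
    (ht : G.IsClique t) (hu : G.IsClique u) (hs_card : 2 < s.encard) (hst : (s ∩ t).Nonempty)
    (hsu : (s ∩ u).Nonempty) (htu : (t ∩ u).Nonempty) : (s ∩ t ∩ u).Nonempty := by
  obtain ⟨p, hps, hpt⟩ := hst
  obtain ⟨q, hqs, hqu⟩ := hsu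
  obtain ⟨r, hrt, hru⟩ := htu
  by_cases hpq : p = q
  · exact ⟨p, ⟨hps, hpt⟩, hpq ▸ hqu⟩
  by_cases hpr : p = r
  · exact ⟨p, ⟨hps, hpt⟩, hpr ▸ hru⟩
  by_cases hqr : q = r
  · exact ⟨q, ⟨hqs, hqr ▸ hrt⟩, hqu⟩
  have hr : r ∈ G.commonNeighbors p q := ⟨ht hpt hrt hpr, hu hqu hru hqr⟩
  exact ⟨r, ⟨hG.commonNeighbors_subset_of_isClique hs hs_card hps hqs hpq hr, hrt⟩, hru⟩

end FourCycleFree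

variable {a b c : V}

theorem isClique_triple (hT : G.Adj a b ∧ G.Adj b c ∧ G.Adj a c) :
    G.IsClique ({a, b, c} : Set V) := by
  simp [SimpleGraph.isClique_insert, hT]

theorem two_lt_encard_triple (hT : G.Adj a b ∧ G.Adj b c ∧ G.Adj a c) :
    2 < ({a, b, c} : Set V).encard := by
  rw [Set.encard_eq_three.2 ⟨a, b, c, hT.1.ne, hT.2.2.ne, hT.2.1.ne, rfl⟩]
  norm_num

theorem edgeSet_inter_sym2_triple (hT : G.Adj a b ∧ G.Adj b c ∧ G.Adj a c) :
    G.edgeSet ∩ ({a, b, c} : Set V).sym2 = {s(a, b), s(b, c), s(a, c)} := by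
  obtain ⟨hab, hbc, hac⟩ := hT
  refine Set.Subset.antisymm (Sym2.ind fun x y ↦ ?_)
    (by simp [Set.insert_subset_iff, hab, hbc, hac])
  simp only [Set.mem_inter_iff, SimpleGraph.mem_edgeSet, Set.mk_mem_sym2_iff, Set.mem_insert_iff,
    Set.mem_singleton_iff, Sym2.eq_iff]
  rintro ⟨hxy, hx, hy⟩
  have hne : x ≠ y := hxy.ne
  grind

end

theorem three_triangles_pairwise_meeting_general {V : Type*} {G : SimpleGraph V}
    (hG : FourCycleFree G) {s t u : Set V} (hs : G.IsClique s) (ht : G.IsClique t)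
    (hu : G.IsClique u) (hs_card : 2 < s.encard) (ht_card : 2 < t.encard) (hu_card : 2 < u.encard)
    (hne_st : s ≠ t) (hne_su : s ≠ u) (hne_tu : t ≠ u) (hst : (s ∩ t).Nonempty)
    (hsu : (s ∩ u).Nonempty) (htu : (t ∩ u).Nonempty) :
    Disjoint (G.edgeSet ∩ s.sym2) (G.edgeSet ∩ t.sym2) ∧
    Disjoint (G.edgeSet ∩ s.sym2) (G.edgeSet ∩ u.sym2) ∧
    Disjoint (G.edgeSet ∩ t.sym2) (G.edgeSet ∩ u.sym2) ∧
    (s ∩ t ∩ u).Nonempty :=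
  ⟨disjoint_edgeSet_inter_sym2 (hG.inter_subsingleton_of_isClique hs ht hs_card ht_card hne_st),
    disjoint_edgeSet_inter_sym2 (hG.inter_subsingleton_of_isClique hs hu hs_card hu_card hne_su),
    disjoint_edgeSet_inter_sym2 (hG.inter_subsingleton_of_isClique ht hu ht_card hu_card hne_tu),
    hG.inter_inter_nonempty_of_isClique hs ht hu hs_card hst hsu htu⟩

/-- Let `G` be a finite simple graph with no `4`-cycle and let
`C₁, C₂, C₃` be three distinct `3`-cycles (triangles, given by their vertices
`aᵢ, bᵢ, cᵢ`) such that any two of them share a vertex.  Then their edge sets are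
pairwise disjoint and all three triangles share a common vertex, i.e.
`C₁ ∪ C₂ ∪ C₃` is the friendship graph of three triangles glued at one vertex. -/
theorem three_triangles_pairwise_meeting
    {V : Type*} [Fintype V] (G : SimpleGraph V)
    (h4 : ¬ ∃ (v : V) (w : G.Walk v v), w.IsCycle ∧ w.length = 4)
    (a₁ b₁ c₁ a₂ b₂ c₂ a₃ b₃ c₃ : V)
    (hT₁ : G.Adj a₁ b₁ ∧ G.Adj b₁ c₁ ∧ G.Adj a₁ c₁)
    (hT₂ : G.Adj a₂ b₂ ∧ G.Adj b₂ c₂ ∧ G.Adj a₂ c₂)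
    (hT₃ : G.Adj a₃ b₃ ∧ G.Adj b₃ c₃ ∧ G.Adj a₃ c₃)
    (hne12 : ({a₁, b₁, c₁} : Set V) ≠ {a₂, b₂, c₂})
    (hne13 : ({a₁, b₁, c₁} : Set V) ≠ {a₃, b₃, c₃})
    (hne23 : ({a₂, b₂, c₂} : Set V) ≠ {a₃, b₃, c₃})
    (hi12 : (({a₁, b₁, c₁} : Set V) ∩ {a₂, b₂, c₂}).Nonempty)
    (hi13 : (({a₁, b₁, c₁} : Set V) ∩ {a₃, b₃, c₃}).Nonempty)
    (hi23 : (({a₂, b₂, c₂} : Set V) ∩ {a₃, b₃, c₃}).Nonempty) :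
    Disjoint ({s(a₁, b₁), s(b₁, c₁), s(a₁, c₁)} : Set (Sym2 V))
        {s(a₂, b₂), s(b₂, c₂), s(a₂, c₂)} ∧
    Disjoint ({s(a₁, b₁), s(b₁, c₁), s(a₁, c₁)} : Set (Sym2 V))
        {s(a₃, b₃), s(b₃, c₃), s(a₃, c₃)} ∧
    Disjoint ({s(a₂, b₂), s(b₂, c₂), s(a₂, c₂)} : Set (Sym2 V))
        {s(a₃, b₃), s(b₃, c₃), s(a₃, c₃)} ∧
    (({a₁, b₁, c₁} : Set V) ∩ {a₂, b₂, c₂} ∩ {a₃, b₃, c₃}).Nonempty := by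
  rw [← edgeSet_inter_sym2_triple hT₁, ← edgeSet_inter_sym2_triple hT₂,
    ← edgeSet_inter_sym2_triple hT₃]
  exact three_triangles_pairwise_meeting_general h4 (isClique_triple hT₁) (isClique_triple hT₂)
    (isClique_triple hT₃) (two_lt_encard_triple hT₁) (two_lt_encard_triple hT₂)
    (two_lt_encard_triple hT₃) hne12 hne13 hne23 hi12 hi13 hi23
end
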